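/- Fix an integer k ≥ 1 and suppose ρ : ℕ → (0,1) satisfies Φ_{(1)}(ρ(n)) = n for all sufficiently large n. Then p_{ℙ_k}(n) = ( ρ(n)^{−n} · Ψ(ρ(n)) / √(2π · Φ_{(2)}(ρ(n))) ) · ( 1 + O(n^{−1/(2k+3)}) ) as n → ∞. -/

import Mathlib

/-!
The proof is the saddle point method on the circle `|z| = ρ(n)`. By unique factorization the
partitions of `n` into `k`-th powers of primes correspond to the integers `m ≥ 1` whose prime factors
have `k`-th powers summing to `n` (`card_primePowSum`), so the generating function of `p_{ℙ_k}` is an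
Euler product equal to `Ψ` (`exp_weight_eq_tsum`). Cauchy's formula (`cauchy_formula`) expresses
`ρ ^ n p_{ℙ_k}(n) / Ψ(ρ)` as an integral over `[-π, π]` of the function `saddle`, whose linear phase
vanishes because `Φ_{(1)}(ρ) = n`.

Write `ρ = e ^ (-1/X)`, `N = ⌊X ^ (1/k)⌋`, and let `L` be a large multiple of `log N`. Then
`Φ_{(l+1)}(ρ) ≪ N ^ (k(l+1)+1)` (`moment_upper`), and Chebyshev's bound gives a lower bound for
`Φ_{(2)}(ρ)` of the same size up to powers of `L`. For `|t| ≤ t₀`, where `t₀` is `N ^ (-k-1/2)` times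
a power of `L`, the integrand is `e ^ (-Φ_{(2)} t² / 2)` up to the cubic error `Φ_{(3)} t₀³`, which is
`N ^ (-1/2)` times a power of `L` (`saddle_near`, `gaussian_comparison`).

For `t₀ < |t| ≤ π` the integrand is at most `e ^ (-L)`. With `θ = t / (2π)` this amounts to
`∑_{p ≤ N} ‖θ p ^ k‖² > L`, where `‖·‖` is the distance to the nearest integer (`minor_arc`). No
exponential sum estimate is needed: if the sum is at most `L`, then `θ p ^ k` is very close to an
integer for most primes `p ≤ N`. This set of primes has density about `1 / L`, so it contains a
`k`-dimensional cube with sides bounded by powers of `L`, and the `k`-fold difference over the cube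
puts `r θ` close to an integer for some `r` bounded by a power of `L` (`exists_small_multiple`).
Primes slightly larger than `r` rule out that `θ` is near a nonintegral fraction of denominator
dividing `r`. Hence `θ` is near `0`, where `‖θ p ^ k‖ = |θ| p ^ k` for the primes with `|θ| p ^ k ≤ 1/2`;
comparing at the largest such scale gives `|θ| ≤ t₀ / (2π)`.

The relative error is thus `≪ L ^ (6k+6) N ^ (-1/2)` (`saddleError_bound`). As `n ≪ N ^ (k+1)`, this
is `≪ n ^ (-1/(2k+3))` (`error_conversion`).
-/

open Filter

/-- Number of partitions of `n` with all parts `k`-th powers of primes. -/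
noncomputable def pPk (k n : ℕ) : ℕ :=
  Nat.card {P : n.Partition // ∀ i ∈ P.parts, ∃ p : ℕ, p.Prime ∧ i = p ^ k}

/-- `Φ_{(m)}(ρ) = (ρ d/dρ)^m Φ(ρ) = ∑_{j≥1} ∑_p j^{m-1} p^{km} ρ^{j p^k}`.
    For `m = 0` this is `Φ(ρ)` itself, so `Ψ(ρ) = exp (Phim k 0 ρ)`. -/
noncomputable def Phim (k m : ℕ) (ρ : ℝ) : ℝ :=
  ∑' (j : ℕ+) (p : Nat.Primes),
    (j : ℝ) ^ ((m : ℤ) - 1) * ((p : ℕ) : ℝ) ^ (k * m) * ρ ^ ((j : ℕ) * (p : ℕ) ^ k)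

/-! ### Iterated differences modulo one, and sums over primes -/

/-- Distance from `x` to the nearest integer. -/
noncomputable def distInt (x : ℝ) : ℝ := |x - round x|

lemma distInt_nonneg (x : ℝ) : 0 ≤ distInt x := abs_nonneg _

lemma distInt_le (x : ℝ) (m : ℤ) : distInt x ≤ |x - m| := round_le x m

lemma distInt_sub_le (x y : ℝ) : distInt (x - y) ≤ distInt x + distInt y := by
  refine (distInt_le _ (round x - round y)).trans ?_
  push_cast
  have : x - y - (round x - round y : ℝ) = (x - round x) - (y - round y) := by ring
  rw [this]
  exact abs_sub _ _

lemma abs_le_distInt {x : ℝ} (hx : |x| ≤ 1 / 2) : |x| ≤ distInt x := by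
  unfold distInt
  by_cases h : round x = 0
  · simp [h]
  · have h1 : (1 : ℝ) ≤ |(round x : ℝ)| := by
      exact_mod_cast Int.one_le_abs h
    have h2 : |(round x : ℝ)| ≤ |x| + |x - round x| := by
      have := abs_sub x (x - round x)
      simpa using this
    linarith

/-- `IsPolyDiff k a g`: every `k`-fold iterated difference of `g` with steps `h₁, …, h_k` is
constant, equal to `a * h₁ * ⋯ * h_k`.  It holds for polynomials of degree at most `k`, with `a`
being `k!` times the coefficient of degree `k`. -/
def IsPolyDiff : ℕ → ℝ → (ℕ → ℝ) → Prop
  | 0, a, g => ∀ x, g x = a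
  | k + 1, a, g => ∀ h : ℕ, IsPolyDiff k (a * h) (fun x => g (x + h) - g x)

lemma IsPolyDiff.add {k : ℕ} : ∀ {a b : ℝ} {f g : ℕ → ℝ}, IsPolyDiff k a f → IsPolyDiff k b g →
    IsPolyDiff k (a + b) (fun x => f x + g x) := by
  induction k with
  | zero => intro a b f g hf hg x; simp [hf x, hg x]
  | succ k ih =>
    intro a b f g hf hg h
    have := ih (hf h) (hg h)
    convert this using 1
    · ring
    · funext x; ring

lemma IsPolyDiff.smul {k : ℕ} (c : ℝ) : ∀ {a : ℝ} {f : ℕ → ℝ}, IsPolyDiff k a f →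
    IsPolyDiff k (c * a) (fun x => c * f x) := by
  induction k with
  | zero => intro a f hf x; simp [hf x]
  | succ k ih =>
    intro a f hf h
    have := ih (hf h)
    convert this using 1
    · ring
    · funext x; ring

lemma IsPolyDiff.succ {k : ℕ} : ∀ {a : ℝ} {f : ℕ → ℝ}, IsPolyDiff k a f →
    IsPolyDiff (k + 1) 0 f := by
  induction k with
  | zero => intro a f hf h x; simp [hf x, hf (x + h)]
  | succ k ih =>
    intro a f hf h
    have := ih (hf h)
    simpa using this

lemma IsPolyDiff.of_lt {i k : ℕ} (hik : i < k) {a : ℝ} {f : ℕ → ℝ} (hf : IsPolyDiff i a f) :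
    IsPolyDiff k 0 f := by
  induction k, hik using Nat.le_induction with
  | base => exact hf.succ
  | succ k _ ih => exact ih.succ

lemma IsPolyDiff.zero (k : ℕ) : IsPolyDiff k 0 (fun _ => 0) := by
  induction k with
  | zero => intro x; rfl
  | succ k ih => intro h; simpa using ih

lemma IsPolyDiff.sum {k : ℕ} (s : Finset ℕ) (f : ℕ → ℕ → ℝ)
    (hf : ∀ i ∈ s, IsPolyDiff k 0 (f i)) : IsPolyDiff k 0 (fun x => ∑ i ∈ s, f i x) := by
  induction s using Finset.induction_on with
  | empty => simpa using IsPolyDiff.zero k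
  | insert a s ha ih =>
    have h1 := (hf a (by simp)).add (ih fun i hi => hf i (by simp [hi]))
    simpa [Finset.sum_insert ha] using h1

lemma IsPolyDiff.pow (k : ℕ) : IsPolyDiff k (k.factorial : ℝ) (fun x => (x : ℝ) ^ k) := by
  induction k using Nat.strong_induction_on with
  | _ k ih =>
    cases k with
    | zero => intro x; simp
    | succ k =>
      intro h
      have h1 := (ih k (by omega)).smul ((k + 1 : ℕ) * (h : ℝ))
      have h2 := IsPolyDiff.sum (k := k) (Finset.range k)
        (fun i x => ((h : ℝ) ^ (k + 1 - i) * ((k + 1).choose i : ℝ)) * (x : ℝ) ^ i)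
        (fun i hi => by
          have hik : i < k := Finset.mem_range.mp hi
          exact ((ih i (by omega)).smul _).of_lt hik)
      have h3 := h1.add h2
      convert h3 using 1
      · rw [Nat.factorial_succ]; push_cast; ring
      · funext x
        push_cast
        rw [add_pow, Finset.sum_range_succ, Finset.sum_range_succ]
        have : ∀ i ∈ Finset.range k, (x : ℝ) ^ i * (h : ℝ) ^ (k + 1 - i) * ((k + 1).choose i : ℝ)
            = (h : ℝ) ^ (k + 1 - i) * ((k + 1).choose i : ℝ) * (x : ℝ) ^ i := by
          intro i _; ring
        rw [Finset.sum_congr rfl this]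
        have e1 : k + 1 - k = 1 := by omega
        simp [e1]
        ring

/-- A dense subset of `[0, N)` contains many pairs with the same small difference: the elements
with no successor in `S` within distance `B / 2` are well spaced, hence few, and the remaining
ones are distributed among at most `B / 2` differences. -/
lemma exists_common_gap {B N : ℕ} {S : Finset ℕ} (hS : S ⊆ Finset.range N)
    (h8 : 8 * N ≤ B * S.card) (hBN : B ≤ N) (hN : 0 < N) :
    ∃ h, 1 ≤ h ∧ h ≤ B ∧ 8 * N ≤ B ^ 2 * (S.filter (fun s => s + h ∈ S)).card := by
  by_contra hcon
  push Not at hcon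
  obtain ⟨H, hH⟩ : ∃ H, H = B / 2 := ⟨_, rfl⟩
  set bad := S.filter (fun s => ∀ h ∈ Finset.Icc 1 H, s + h ∉ S) with hbad
  have hbadc : bad.card ≤ N / (H + 1) + 1 := by
    have : bad.card ≤ (Finset.range (N / (H + 1) + 1)).card := by
      refine Finset.card_le_card_of_injOn (fun s => s / (H + 1)) ?_ ?_
      · intro s hs
        have hs' := Finset.mem_range.mp (hS (Finset.mem_filter.mp hs).1)
        simp only [Finset.coe_range, Set.mem_Iio]
        exact Nat.lt_succ_of_le (Nat.div_le_div_right hs'.le)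
      · have key : ∀ s ∈ bad, ∀ t ∈ bad, s < t → s / (H + 1) = t / (H + 1) → False := by
          intro s hs t ht hst he
          have hs2 := (Finset.mem_filter.mp hs).2 (t - s) (by
            have h1 := Nat.div_add_mod s (H + 1)
            have h2 := Nat.div_add_mod t (H + 1)
            have h3 := Nat.mod_lt t (show H + 1 > 0 by omega)
            rw [← he] at h2
            rw [Finset.mem_Icc]
            constructor
            · omega
            · omega)
          apply hs2
          have : s + (t - s) = t := by omega
          rw [this]
          exact (Finset.mem_filter.mp ht).1
        intro s hs t ht he
        rcases lt_trichotomy s t with h | h | h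
        · exact (key s hs t ht h he).elim
        · exact h
        · exact (key t ht s hs h he.symm).elim
    simpa using this
  have hcover : S ⊆ bad ∪ (Finset.Icc 1 H).biUnion (fun h => S.filter (fun s => s + h ∈ S)) := by
    intro s hs
    by_cases hb : ∀ h ∈ Finset.Icc 1 H, s + h ∉ S
    · exact Finset.mem_union_left _ (Finset.mem_filter.mpr ⟨hs, hb⟩)
    · push Not at hb
      obtain ⟨h, hh, hhS⟩ := hb
      exact Finset.mem_union_right _
        (Finset.mem_biUnion.mpr ⟨h, hh, Finset.mem_filter.mpr ⟨hs, hhS⟩⟩)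
  have hcard : S.card ≤ bad.card + ∑ h ∈ Finset.Icc 1 H, (S.filter (fun s => s + h ∈ S)).card :=
    (Finset.card_le_card hcover).trans
      ((Finset.card_union_le _ _).trans (Nat.add_le_add_left Finset.card_biUnion_le _))
  have hsum : B ^ 2 * ∑ h ∈ Finset.Icc 1 H, (S.filter (fun s => s + h ∈ S)).card ≤ H * (8 * N) := by
    rw [Finset.mul_sum]
    refine (Finset.sum_le_card_nsmul _ _ (8 * N) ?_).trans (by simp)
    intro h hh
    rw [Finset.mem_Icc] at hh
    exact (hcon h hh.1 (by omega)).le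
  have hB : 0 < B := by
    rcases Nat.eq_zero_or_pos B with h | h
    · subst h; omega
    · exact h
  have h1 : B * (N / (H + 1)) ≤ 2 * N := by
    have h2 := Nat.div_mul_le_self N (H + 1)
    have h3 : B ≤ 2 * (H + 1) := by omega
    calc B * (N / (H + 1)) ≤ 2 * (H + 1) * (N / (H + 1)) := Nat.mul_le_mul_right _ h3
      _ = 2 * (N / (H + 1) * (H + 1)) := by ring
      _ ≤ 2 * N := by omega
  have h2 : B ^ 2 * S.card ≤ B ^ 2 * (N / (H + 1) + 1) + H * (8 * N) := by
    calc B ^ 2 * S.card ≤ B ^ 2 * (bad.card +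
          ∑ h ∈ Finset.Icc 1 H, (S.filter (fun s => s + h ∈ S)).card) := Nat.mul_le_mul_left _ hcard
      _ ≤ _ := by
        rw [mul_add]
        exact Nat.add_le_add (Nat.mul_le_mul_left _ hbadc) hsum
  have h3 : B * (8 * N) ≤ B ^ 2 * S.card := by
    calc B * (8 * N) ≤ B * (B * S.card) := Nat.mul_le_mul_left _ h8
      _ = _ := by ring
  have h4 : B ^ 2 * (N / (H + 1) + 1) ≤ B * (3 * N) := by
    calc B ^ 2 * (N / (H + 1) + 1) = B * (B * (N / (H + 1)) + B) := by ring
      _ ≤ B * (3 * N) := Nat.mul_le_mul_left _ (by omega)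
  have h5 : H * (8 * N) ≤ B * (4 * N) := by
    have : 2 * H ≤ B := by omega
    nlinarith
  have h6 : 0 < B * N := Nat.mul_pos hB hN
  nlinarith

/-- If `g` is a polynomial of degree `k` and `g s` is close to an integer for all `s` in a dense
subset of `[0, N)`, then a small positive multiple of its (normalised) leading coefficient is close
to an integer.  Combinatorially, a dense set contains a `k`-dimensional cube with short sides, over
which the alternating sum of `g` is `a * q`. -/
lemma exists_small_multiple (k : ℕ) : ∀ (a : ℝ) (g : ℕ → ℝ), IsPolyDiff k a g →
    ∀ (η : ℝ) (B N : ℕ) (S : Finset ℕ), S ⊆ Finset.range N → 8 * N ≤ B * S.card →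
    B ^ (2 ^ k) ≤ N → 0 < N → (∀ s ∈ S, distInt (g s) ≤ η) →
    ∃ q : ℕ, 1 ≤ q ∧ q * B ≤ B ^ (2 ^ k) ∧ distInt (a * q) ≤ 2 ^ k * η := by
  induction k with
  | zero =>
    intro a g hg η B N S hS h8 hB hN hη
    have hne : S.Nonempty := by
      rw [Finset.nonempty_iff_ne_empty]
      rintro rfl
      simp at h8; omega
    obtain ⟨s, hs⟩ := hne
    refine ⟨1, le_rfl, by simp, ?_⟩
    have := hη s hs
    rw [hg s] at this
    simpa using this
  | succ k ih =>
    intro a g hg η B N S hS h8 hB hN hη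
    have hBN : B ≤ N := by
      refine le_trans ?_ hB
      exact Nat.le_self_pow (by positivity) B
    obtain ⟨h, h1, hhB, hc⟩ := exists_common_gap hS h8 hBN hN
    have hpow : (B ^ 2) ^ (2 ^ k) = B ^ (2 ^ (k + 1)) := by
      rw [← pow_mul, pow_succ, mul_comm 2]
    obtain ⟨q, hq1, hqB, hq⟩ := ih (a * h) _ (hg h) (2 * η) (B ^ 2) N
      (S.filter (fun s => s + h ∈ S)) ((Finset.filter_subset _ _).trans hS) hc
      (by rw [hpow]; exact hB) hN (by
        intro s hs
        rw [Finset.mem_filter] at hs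
        have := distInt_sub_le (g (s + h)) (g s)
        linarith [hη s hs.1, hη _ hs.2])
    refine ⟨h * q, Nat.mul_pos h1 hq1, ?_, ?_⟩
    · rw [← hpow]
      refine le_trans ?_ hqB
      calc h * q * B ≤ B * q * B := by gcongr
        _ = q * B ^ 2 := by ring
    · have e : a * (h * q : ℕ) = a * h * q := by push_cast; ring
      rw [e, pow_succ]
      linarith

/-- Chebyshev's lower bound for `π(M)`, with `L ≥ 10 log N` replacing the logarithm uniformly in
`M ≤ N`. -/
lemma chebyshev_lower {L : ℝ} {N : ℕ} (hL : 10 * Real.log N ≤ L) {M : ℕ} (hM : 2 ≤ M)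
    (hMN : M ≤ N) : (M : ℝ) ≤ L * (Nat.primesLE M).card := by
  have h1 := Chebyshev.psi_ge M
  have h2 := Chebyshev.psi_le_primeCounting_mul_log M
  rw [Nat.primesLE_card_eq_primeCounting]
  have hM' : (2 : ℝ) ≤ M := by exact_mod_cast hM
  have h3 : Real.log (M + 1) ≤ (M + 1) / 4 - 1 + 2 * Real.log 2 := by
    have h4 := Real.log_le_sub_one_of_pos (show (0 : ℝ) < (M + 1) / 4 by positivity)
    have h5 : Real.log 4 = 2 * Real.log 2 := by
      rw [show (4 : ℝ) = 2 ^ 2 by norm_num, Real.log_pow]; norm_num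
    rw [Real.log_div (by positivity) (by norm_num), h5] at h4
    linarith
  have h6 := Real.log_two_gt_d9
  have h7 : (M : ℝ) / 10 ≤ M * Real.log 2 - Real.log (M + 1) := by
    nlinarith
  have h8 : Real.log M ≤ Real.log N :=
    Real.log_le_log (by linarith) (by exact_mod_cast hMN)
  have h9 : (0 : ℝ) ≤ (Nat.primeCounting M : ℝ) := by positivity
  nlinarith [mul_le_mul_of_nonneg_left h8 h9, mul_le_mul_of_nonneg_left hL h9]

/-- At most `M / (2L)` integers are `≤ M / (2L)`, so at least half of the `M / L` primes up to `M`
exceed `M / (2L)`. -/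
lemma sum_prime_pow_lower {L : ℕ} {M : ℕ} (k : ℕ) (hL : 0 < L)
    (hM : M ≤ L * (Nat.primesLE M).card) :
    ((M : ℝ) / (2 * L)) ^ (2 * k + 1) ≤ ∑ p ∈ Nat.primesLE M, (p : ℝ) ^ (2 * k) := by
  have hL' : (0 : ℝ) < L := by exact_mod_cast hL
  set T := (Nat.primesLE M).filter (fun p => M < 2 * L * p) with hT
  have hc : (Nat.primesLE M).card ≤ T.card + M / (2 * L) := by
    rw [← Finset.card_filter_add_card_filter_not (s := Nat.primesLE M) (fun p => M < 2 * L * p)]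
    gcongr
    have : (Finset.filter (fun p => ¬ M < 2 * L * p) (Nat.primesLE M)) ⊆
        Finset.Icc 1 (M / (2 * L)) := by
      intro p hp
      rw [Finset.mem_filter, Nat.mem_primesLE] at hp
      rw [Finset.mem_Icc, Nat.le_div_iff_mul_le (by positivity)]
      exact ⟨hp.1.2.one_lt.le, by nlinarith [hp.2]⟩
    simpa using Finset.card_le_card this
  have hc2 : (M : ℝ) / (2 * L) ≤ T.card := by
    have h1 : ((Nat.primesLE M).card : ℝ) ≤ T.card + M / (2 * L) := by
      have h2 : ((M / (2 * L) : ℕ) : ℝ) ≤ (M : ℝ) / ((2 * L : ℕ) : ℝ) := Nat.cast_div_le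
      have h3 : ((Nat.primesLE M).card : ℝ) ≤ T.card + (M / (2 * L) : ℕ) := by exact_mod_cast hc
      push_cast at h2
      linarith
    have h4 : (M : ℝ) ≤ L * (Nat.primesLE M).card := by exact_mod_cast hM
    have h5 : (M : ℝ) / L ≤ (Nat.primesLE M).card := by
      rw [div_le_iff₀ hL']; linarith
    have h6 : (M : ℝ) / L = M / (2 * L) + M / (2 * L) := by field_simp; ring
    linarith
  have hx : (0 : ℝ) ≤ (M : ℝ) / (2 * L) := by positivity
  calc ((M : ℝ) / (2 * L)) ^ (2 * k + 1) = ((M : ℝ) / (2 * L)) * ((M : ℝ) / (2 * L)) ^ (2 * k) := by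
        ring
    _ ≤ T.card * ((M : ℝ) / (2 * L)) ^ (2 * k) := by gcongr
    _ = ∑ p ∈ T, ((M : ℝ) / (2 * L)) ^ (2 * k) := by simp
    _ ≤ ∑ p ∈ T, (p : ℝ) ^ (2 * k) := by
        refine Finset.sum_le_sum fun p hp => ?_
        have : M < 2 * L * p := (Finset.mem_filter.mp hp).2
        have : (M : ℝ) < 2 * L * p := by exact_mod_cast this
        gcongr
        rw [div_le_iff₀ (by positivity)]; linarith
    _ ≤ _ := Finset.sum_le_sum_of_subset_of_nonneg (Finset.filter_subset _ _)
        (fun _ _ _ => by positivity)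

/-! ### Minor arcs -/

/-- While `M ^ k * |θ| ≤ 1 / 2`, the distance from `θ * p ^ k` to the nearest integer is exactly
`|θ| * p ^ k` for all `p ≤ M`. A bound for the sum of the squared distances then bounds `θ`. -/
lemma sum_distInt_lower {θ : ℝ} {k L M N : ℕ} (hL : 0 < L)
    (hπ : M ≤ L * (Nat.primesLE M).card) (hMN : M ≤ N)
    (hsum : ∑ p ∈ Nat.primesLE N, distInt (θ * (p : ℝ) ^ k) ^ 2 ≤ L)
    (hM : (M : ℝ) ^ k * |θ| ≤ 1 / 2) :
    θ ^ 2 * ((M : ℝ) / (2 * L)) ^ (2 * k + 1) ≤ L := by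
  refine le_trans ?_ hsum
  calc θ ^ 2 * ((M : ℝ) / (2 * L)) ^ (2 * k + 1)
      ≤ θ ^ 2 * ∑ p ∈ Nat.primesLE M, (p : ℝ) ^ (2 * k) := by
        gcongr; exact sum_prime_pow_lower k hL hπ
    _ = ∑ p ∈ Nat.primesLE M, |θ * (p : ℝ) ^ k| ^ 2 := by
        rw [Finset.mul_sum]
        refine Finset.sum_congr rfl fun p _ => ?_
        rw [sq_abs]; ring
    _ ≤ ∑ p ∈ Nat.primesLE M, distInt (θ * (p : ℝ) ^ k) ^ 2 := by
        refine Finset.sum_le_sum fun p hp => ?_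
        have hpM : (p : ℝ) ≤ M := by exact_mod_cast Nat.le_of_mem_primesLE hp
        gcongr
        apply abs_le_distInt
        rw [abs_mul, abs_of_nonneg (show (0 : ℝ) ≤ (p : ℝ) ^ k by positivity), mul_comm]
        refine le_trans ?_ hM
        gcongr
    _ ≤ _ := Finset.sum_le_sum_of_subset_of_nonneg (Nat.primesLE_mono hMN)
        (fun _ _ _ => by positivity)

set_option maxHeartbeats 1000000 in
/-- The minor arc estimate.  If `θ * p ^ k` is on average very close to integers for primes
`p ≤ N`, then `θ` is very close to `0`.  All auxiliary scales in the proof are powers of `L`, which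
stands for a large multiple of `log N`: the primes with `θ * p ^ k` within `η` of an integer are
dense, which yields `1 ≤ r ≤ L ^ a` with `θ * r` close to an integer `m`; primes between `L ^ a` and
`L ^ b` show that `r ∣ m`, so `θ` itself is small, and the bound then improves itself up to the
scale `N`. -/
lemma minor_arc {k L N : ℕ} (hL : k.factorial + 2 ^ k + 64 ≤ L)
    (hLN : L ^ (2 * (k * (3 * (2 ^ (k + 1) + 1) + 4 * k + 7) + 3 * 2 ^ (k + 1) + 4 * k + 12) + 3)
      ≤ N)
    (hπ : ∀ M, 2 ≤ M → M ≤ N → M ≤ L * (Nat.primesLE M).card) {θ : ℝ} (hθ : |θ| ≤ 1 / 2)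
    (hsum : ∑ p ∈ Nat.primesLE N, distInt (θ * (p : ℝ) ^ k) ^ 2 ≤ L) :
    θ ^ 2 * (N : ℝ) ^ (2 * k + 1) ≤ (L : ℝ) ^ (4 * k + 3) := by
  obtain ⟨a, ha⟩ : ∃ a, a = 2 ^ (k + 1) + 1 := ⟨_, rfl⟩
  obtain ⟨b, hb⟩ : ∃ b, b = 3 * a + 4 * k + 7 := ⟨_, rfl⟩
  obtain ⟨J, hJ⟩ : ∃ J, J = k * b + b + 2 := ⟨_, rfl⟩
  have hK : L ^ (2 * J + 3) ≤ N := by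
    convert hLN using 2
    rw [hJ, hb, ha]; ring
  have hL64 : 64 ≤ L := by omega
  have hL1 : 1 ≤ L := by omega
  have hL0 : 0 < L := by omega
  have hLr : (64 : ℝ) ≤ L := by exact_mod_cast hL64
  have hLr0 : (0 : ℝ) < L := by linarith
  have hLr1 : (1 : ℝ) ≤ L := by linarith
  have hfac : k.factorial ≤ L := by
    have := Nat.zero_le (2 ^ k); omega
  have htwo : 2 ^ k ≤ L := by omega
  have hpowN : ∀ j, j ≤ 2 * J + 3 → L ^ j ≤ N := fun j hj =>
    (Nat.pow_le_pow_right hL1 hj).trans hK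
  have hN2 : 2 ≤ N := by
    have := hpowN 1 (by omega); rw [pow_one] at this; omega
  -- `η` is the closeness to integers demanded of the good primes
  obtain ⟨η, hη⟩ : ∃ η : ℝ, η = 1 / (L : ℝ) ^ J := ⟨_, rfl⟩
  have hη0 : 0 < η := by rw [hη]; positivity
  set S := (Nat.primesLE N).filter (fun p : ℕ => distInt (θ * (p : ℝ) ^ k) ≤ η) with hSdef
  set bad := (Nat.primesLE N).filter (fun p : ℕ => ¬ distInt (θ * (p : ℝ) ^ k) ≤ η) with hbad
  have hbadc : bad.card ≤ L ^ (2 * J + 1) := by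
    have h1 : (bad.card : ℝ) * η ^ 2 ≤ L := by
      calc (bad.card : ℝ) * η ^ 2 = ∑ p ∈ bad, η ^ 2 := by simp
        _ ≤ ∑ p ∈ bad, distInt (θ * (p : ℝ) ^ k) ^ 2 := by
            refine Finset.sum_le_sum fun p hp => ?_
            have := (Finset.mem_filter.mp hp).2
            push Not at this
            gcongr
        _ ≤ ∑ p ∈ Nat.primesLE N, distInt (θ * (p : ℝ) ^ k) ^ 2 :=
            Finset.sum_le_sum_of_subset_of_nonneg (Finset.filter_subset _ _)
              (fun _ _ _ => by positivity)
        _ ≤ L := hsum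
    have h2 : (bad.card : ℝ) ≤ (L : ℝ) ^ (2 * J + 1) := by
      rw [hη, div_pow, one_pow, mul_one_div, div_le_iff₀ (by positivity)] at h1
      calc (bad.card : ℝ) ≤ L * ((L : ℝ) ^ J) ^ 2 := h1
        _ = _ := by ring
    exact_mod_cast h2
  have hScard : N ≤ 2 * L * S.card := by
    have h1 := hπ N hN2 le_rfl
    have h2 : S.card + bad.card = (Nat.primesLE N).card :=
      Finset.card_filter_add_card_filter_not _
    rw [← h2] at h1
    have h3 : 2 * L * bad.card ≤ N := by
      calc 2 * L * bad.card ≤ L * L * L ^ (2 * J + 1) := by gcongr; omega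
        _ = L ^ (2 * J + 3) := by ring
        _ ≤ N := hK
    nlinarith
  have hSsub : S ⊆ Finset.range (N + 1) := by
    intro p hp
    have := Nat.le_of_mem_primesLE (Finset.mem_filter.mp hp).1
    rw [Finset.mem_range]; omega
  have h2k : 2 ^ (k + 1) ≤ 2 * J + 3 := by
    have : 2 ^ (k + 1) ≤ b := by rw [hb, ha]; omega
    omega
  obtain ⟨q, hq1, hqB, hq⟩ := exists_small_multiple k _ _ ((IsPolyDiff.pow k).smul θ) η (32 * L)
    (N + 1) S hSsub (by nlinarith) (by
      have : (32 * L) ^ 2 ^ k ≤ N := by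
        calc (32 * L) ^ 2 ^ k ≤ (L ^ 2) ^ 2 ^ k := by
              gcongr; nlinarith
          _ = L ^ (2 ^ (k + 1)) := by rw [← pow_mul, pow_succ, mul_comm 2]
          _ ≤ N := hpowN _ h2k
      omega) (by omega) (fun s hs => (Finset.mem_filter.mp hs).2)
  have hqL : q ≤ L ^ (2 ^ (k + 1)) := by
    calc q ≤ q * (32 * L) := Nat.le_mul_of_pos_right _ (by omega)
      _ ≤ (32 * L) ^ 2 ^ k := hqB
      _ ≤ (L ^ 2) ^ 2 ^ k := by gcongr; nlinarith
      _ = L ^ (2 ^ (k + 1)) := by rw [← pow_mul, pow_succ, mul_comm 2]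
  obtain ⟨r, hr⟩ : ∃ r, r = k.factorial * q := ⟨_, rfl⟩
  have hr1 : 1 ≤ r := by rw [hr]; exact Nat.mul_pos (Nat.factorial_pos k) hq1
  have hra : r ≤ L ^ a := by
    rw [hr, ha, pow_succ, mul_comm]; gcongr
  have hrr : (1 : ℝ) ≤ r := by exact_mod_cast hr1
  have hrar : (r : ℝ) ≤ (L : ℝ) ^ a := by exact_mod_cast hra
  obtain ⟨m, hm⟩ : ∃ m, m = round (θ * r) := ⟨_, rfl⟩
  have hmη : |θ * r - m| ≤ L * η := by
    have e : θ * (k.factorial : ℝ) * q = θ * r := by rw [hr]; push_cast; ring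
    rw [e] at hq
    unfold distInt at hq
    rw [← hm] at hq
    refine hq.trans ?_
    gcongr
    exact_mod_cast htwo
  have hPη : ((L : ℝ) ^ b) ^ k * (L * η) ≤ 1 / 2 := by
    rw [hη, hJ]
    have : ((L : ℝ) ^ b) ^ k * (L * (1 / (L : ℝ) ^ (k * b + b + 2))) = 1 / (L ^ b * L) := by
      field_simp
      ring
    rw [this]
    apply one_div_le_one_div_of_le (by norm_num)
    have : (1 : ℝ) ≤ (L : ℝ) ^ b := one_le_pow₀ hLr1
    nlinarith
  have hb2J : b ≤ 2 * J + 3 := by omega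
  have hPN : L ^ b ≤ N := hpowN b hb2J
  have hP2 : 2 ≤ L ^ b := by
    have : L ^ 1 ≤ L ^ b := Nat.pow_le_pow_right hL1 (by omega)
    rw [pow_one] at this
    omega
  -- Primes `p` between `L ^ a` and `L ^ b` are coprime to `r`, so if `r ∤ m` then `p ^ k * m / r` is
  -- at distance at least `1 / r` from the integers, for too many `p`.
  have hdvd : (r : ℤ) ∣ m := by
    by_contra hnd
    have hterm : ∀ p ∈ (Nat.primesLE (L ^ b)).filter (fun p => L ^ a < p),
        1 / (2 * (L : ℝ) ^ a) ≤ distInt (θ * (p : ℝ) ^ k) := by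
      intro p hp
      rw [Finset.mem_filter, Nat.mem_primesLE] at hp
      obtain ⟨⟨hpP, hpp⟩, hpa⟩ := hp
      obtain ⟨z, hz⟩ : ∃ z, z = round (θ * (p : ℝ) ^ k) := ⟨_, rfl⟩
      have hcop : IsCoprime (r : ℤ) ((p : ℤ) ^ k) := by
        apply IsCoprime.pow_right
        rw [Nat.isCoprime_iff_coprime, Nat.coprime_comm]
        exact (Nat.Prime.coprime_iff_not_dvd hpp).mpr
          (Nat.not_dvd_of_pos_of_lt hr1 (by omega))
      have hne : (p : ℤ) ^ k * m - r * z ≠ 0 := by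
        intro h0
        apply hnd
        apply hcop.dvd_of_dvd_mul_left
        exact ⟨z, by linarith⟩
      have h1 : (1 : ℝ) ≤ |((p : ℝ) ^ k * m - r * z)| := by
        exact_mod_cast Int.one_le_abs hne
      have h2 : (r : ℝ) * (θ * (p : ℝ) ^ k - z)
          = (p : ℝ) ^ k * (θ * r - m) + ((p : ℝ) ^ k * m - r * z) := by ring
      have h3 : |(p : ℝ) ^ k * (θ * r - m)| ≤ 1 / 2 := by
        rw [abs_mul, abs_of_nonneg (show (0 : ℝ) ≤ (p : ℝ) ^ k by positivity)]
        refine le_trans ?_ hPη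
        have : (p : ℝ) ≤ (L : ℝ) ^ b := by exact_mod_cast hpP
        gcongr
      have h4 : 1 / 2 ≤ (r : ℝ) * |θ * (p : ℝ) ^ k - z| := by
        have h5 : |(r : ℝ) * (θ * (p : ℝ) ^ k - z)| = r * |θ * (p : ℝ) ^ k - z| := by
          rw [abs_mul, abs_of_nonneg (by linarith : (0 : ℝ) ≤ r)]
        rw [← h5, h2]
        have h6 := abs_sub_abs_le_abs_sub ((p : ℝ) ^ k * m - r * z) (-((p : ℝ) ^ k * (θ * r - m)))
        rw [abs_neg, sub_neg_eq_add, add_comm ((p : ℝ) ^ k * m - r * z)] at h6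
        linarith
      unfold distInt
      rw [← hz, div_le_iff₀ (by positivity)]
      nlinarith [abs_nonneg (θ * (p : ℝ) ^ k - z)]
    have hcount : L ^ b ≤ L * (((Nat.primesLE (L ^ b)).filter (fun p => L ^ a < p)).card + L ^ a) := by
      refine (hπ _ hP2 hPN).trans ?_
      gcongr
      rw [← Finset.card_filter_add_card_filter_not (s := Nat.primesLE (L ^ b)) (fun p => L ^ a < p)]
      gcongr
      have : (Finset.filter (fun p => ¬ L ^ a < p) (Nat.primesLE (L ^ b))) ⊆
          Finset.Icc 1 (L ^ a) := by
        intro p hp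
        rw [Finset.mem_filter, Nat.mem_primesLE] at hp
        rw [Finset.mem_Icc]
        exact ⟨hp.1.2.one_lt.le, by omega⟩
      simpa using Finset.card_le_card this
    have hs : (((Nat.primesLE (L ^ b)).filter (fun p => L ^ a < p)).card : ℝ) *
        (1 / (2 * (L : ℝ) ^ a)) ^ 2 ≤ L := by
      refine le_trans ?_ hsum
      calc _ = ∑ p ∈ (Nat.primesLE (L ^ b)).filter (fun p => L ^ a < p),
            (1 / (2 * (L : ℝ) ^ a)) ^ 2 := by simp
        _ ≤ ∑ p ∈ (Nat.primesLE (L ^ b)).filter (fun p => L ^ a < p),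
            distInt (θ * (p : ℝ) ^ k) ^ 2 := by
            refine Finset.sum_le_sum fun p hp => ?_
            have := hterm p hp
            gcongr
        _ ≤ _ := Finset.sum_le_sum_of_subset_of_nonneg
            ((Finset.filter_subset _ _).trans (Nat.primesLE_mono hPN))
            (fun _ _ _ => by positivity)
    rw [div_pow, one_pow, mul_one_div, div_le_iff₀ (by positivity)] at hs
    have hs' : ((Nat.primesLE (L ^ b)).filter (fun p => L ^ a < p)).card ≤ L * (2 * L ^ a) ^ 2 := by
      exact_mod_cast hs
    have : L ^ b < L ^ b := by
      calc L ^ b ≤ L * (L * (2 * L ^ a) ^ 2 + L ^ a) := hcount.trans (by gcongr)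
        _ = 4 * L ^ (2 * a + 2) + L ^ (a + 1) := by ring
        _ ≤ 4 * L ^ (2 * a + 2) + L ^ (2 * a + 2) := by
            exact Nat.add_le_add_left (Nat.pow_le_pow_right hL1 (by omega)) _
        _ < L ^ (2 * a + 2) * L := by
            have : 0 < L ^ (2 * a + 2) := by positivity
            nlinarith
        _ = L ^ (2 * a + 3) := by ring
        _ ≤ L ^ b := Nat.pow_le_pow_right hL1 (by omega)
    exact lt_irrefl _ this
  have hθη : |θ| ≤ L * η := by
    obtain ⟨c, hc⟩ := hdvd
    have h1 : θ * r - m = r * (θ - c) := by rw [hc]; push_cast; ring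
    have h2 : |θ - c| ≤ L * η := by
      rw [h1, abs_mul, abs_of_nonneg (by linarith : (0 : ℝ) ≤ r)] at hmη
      nlinarith [abs_nonneg (θ - c)]
    have h3 : (L : ℝ) * η < 1 / 2 := by
      rw [hη, hJ]
      have : (L : ℝ) * (1 / (L : ℝ) ^ (k * b + b + 2)) = 1 / ((L : ℝ) ^ (k * b + b) * L) := by
        field_simp
        ring
      rw [this]
      apply one_div_lt_one_div_of_lt (by norm_num)
      have : (1 : ℝ) ≤ (L : ℝ) ^ (k * b + b) := one_le_pow₀ hLr1
      nlinarith
    have h4 : |(c : ℝ)| < 1 := by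
      have := abs_sub θ (θ - c)
      simp at this
      linarith
    have h5 : c = 0 := by
      rw [← Int.abs_lt_one_iff]; exact_mod_cast h4
    simpa [h5] using h2
  have hPθ : ((L ^ b : ℕ) : ℝ) ^ k * |θ| ≤ 1 / 2 := by
    push_cast
    refine le_trans ?_ hPη
    gcongr
  -- At the largest scale `M` with `M ^ k * |θ| ≤ 1 / 2`, if it is below `N`, the sum of squares
  -- exceeds `L` because `M ≥ L ^ b`.
  have hNθ : (N : ℝ) ^ k * |θ| ≤ 1 / 2 := by
    by_contra hcon
    classical
    obtain ⟨M, hM⟩ : ∃ M, M = Nat.findGreatest (fun M : ℕ => (M : ℝ) ^ k * |θ| ≤ 1 / 2) N := ⟨_, rfl⟩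
    have hMP : L ^ b ≤ M := by rw [hM]; exact Nat.le_findGreatest hPN hPθ
    have hMle : M ≤ N := by rw [hM]; exact Nat.findGreatest_le _
    have hMs : (M : ℝ) ^ k * |θ| ≤ 1 / 2 := by
      have := Nat.findGreatest_spec (P := fun M : ℕ => (M : ℝ) ^ k * |θ| ≤ 1 / 2) hPN hPθ
      rw [hM]; exact this
    have hMN : M < N := by
      rcases hMle.lt_or_eq with h | h
      · exact h
      · rw [h] at hMs; exact absurd hMs hcon
    have hM1 : ¬ ((M + 1 : ℕ) : ℝ) ^ k * |θ| ≤ 1 / 2 :=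
      Nat.findGreatest_is_greatest (P := fun M : ℕ => (M : ℝ) ^ k * |θ| ≤ 1 / 2) (n := N)
        (k := M + 1) (by omega) (by omega)
    have h1 := sum_distInt_lower hL0 (hπ M (by omega) hMle) hMle hsum hMs
    have hMr : (1 : ℝ) ≤ M := by
      have : 1 ≤ M := by omega
      exact_mod_cast this
    have h2 : 1 / 4 ≤ θ ^ 2 * (2 * M : ℝ) ^ (2 * k) := by
      push Not at hM1
      have h3 : 1 / 2 ≤ (2 * M : ℝ) ^ k * |θ| := by
        refine hM1.le.trans ?_
        gcongr
        push_cast; linarith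
      calc (1 : ℝ) / 4 = (1 / 2) ^ 2 := by norm_num
        _ ≤ ((2 * M : ℝ) ^ k * |θ|) ^ 2 := by gcongr
        _ = θ ^ 2 * (2 * M : ℝ) ^ (2 * k) := by rw [mul_pow, sq_abs]; ring
    have h3 : θ ^ 2 * ((M : ℝ) / (2 * L)) ^ (2 * k + 1) =
        (θ ^ 2 * (2 * M : ℝ) ^ (2 * k)) * M / (2 * L * (4 * L) ^ (2 * k)) := by
      obtain ⟨x, hx⟩ : ∃ x : ℝ, x = (M : ℝ) / (2 * L) := ⟨_, rfl⟩
      have hMx : (M : ℝ) = x * (2 * L) := by rw [hx]; field_simp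
      rw [← hx, hMx, show 2 * (x * (2 * (L : ℝ))) = x * (4 * L) by ring, mul_pow x]
      field_simp
      ring
    rw [h3, div_le_iff₀ (by positivity)] at h1
    have h4 : (M : ℝ) ≤ L ^ (4 * k + 3) := by
      calc (M : ℝ) = 4 * (1 / 4 * M) := by ring
        _ ≤ 4 * ((θ ^ 2 * (2 * M : ℝ) ^ (2 * k)) * M) := by gcongr
        _ ≤ 4 * (L * (2 * L * (4 * L) ^ (2 * k))) := by gcongr
        _ = 8 * L ^ 2 * (4 * L) ^ (2 * k) := by ring
        _ ≤ L * L ^ 2 * (L * L) ^ (2 * k) := by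
            gcongr <;> linarith
        _ = _ := by rw [← pow_two, ← pow_mul]; ring
    have h5 : L ^ b ≤ L ^ (4 * k + 3) := hMP.trans (by exact_mod_cast h4)
    have h6 : L ^ (4 * k + 3) < L ^ b := Nat.pow_lt_pow_right (by omega) (by omega)
    omega
  have h1 := sum_distInt_lower hL0 (hπ N hN2 le_rfl) le_rfl hsum hNθ
  calc θ ^ 2 * (N : ℝ) ^ (2 * k + 1)
      = (θ ^ 2 * ((N : ℝ) / (2 * L)) ^ (2 * k + 1)) * (2 * L) ^ (2 * k + 1) := by
        rw [mul_assoc, ← mul_pow]; congr 2; field_simp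
    _ ≤ (L : ℝ) * (L * L) ^ (2 * k + 1) := by gcongr; linarith
    _ = _ := by rw [← pow_two, ← pow_mul]; ring

/-! ### The double series and upper bounds for its moments -/

/-- The frequency `j p ^ k` attached to the index `(j, p)` of the double series `Φ`. -/
def freq (k : ℕ) (x : ℕ+ × Nat.Primes) : ℕ := (x.1 : ℕ) * (x.2 : ℕ) ^ k

/-- The weight `ρ ^ (j p ^ k) / j` attached to the index `(j, p)` of the double series `Φ`, so that
`Φ (ρ e ^ (i t)) = ∑ weight * e ^ (i t * freq)`. -/
noncomputable def weight (k : ℕ) (ρ : ℝ) (x : ℕ+ × Nat.Primes) : ℝ := ρ ^ freq k x / (x.1 : ℕ)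

lemma one_le_freq (k : ℕ) (x : ℕ+ × Nat.Primes) : 1 ≤ freq k x :=
  Nat.mul_pos x.1.pos (pow_pos x.2.2.pos k)

lemma weight_nonneg {k : ℕ} {ρ : ℝ} (hρ : 0 < ρ) (x : ℕ+ × Nat.Primes) : 0 ≤ weight k ρ x := by
  unfold weight; positivity

/-- The sum over `j`, estimated by `j ^ l ≤ l! * (j - 1 + l).choose l`. -/
lemma sum_pnat_pow_geometric (l : ℕ) {r : ℝ} (hr0 : 0 < r) (hr1 : r < 1) :
    Summable (fun j : ℕ+ => ((j : ℕ) : ℝ) ^ l * r ^ (j : ℕ)) ∧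
      ∑' j : ℕ+, ((j : ℕ) : ℝ) ^ l * r ^ (j : ℕ) ≤ l.factorial * (r / (1 - r) ^ (l + 1)) := by
  have hn : ‖r‖ < 1 := by rw [Real.norm_of_nonneg hr0.le]; exact hr1
  have hs := summable_choose_mul_geometric_of_norm_lt_one l hn
  have ht := tsum_choose_mul_geometric_of_norm_lt_one l hn
  have hle : ∀ n : ℕ, ((n + 1 : ℕ) : ℝ) ^ l * r ^ (n + 1) ≤
      (l.factorial * r) * (((n + l).choose l : ℝ) * r ^ n) := by
    intro n
    have h1 : (n + 1) ^ l ≤ l.factorial * (n + l).choose l := by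
      rw [← Nat.ascFactorial_eq_factorial_mul_choose]
      exact Nat.pow_succ_le_ascFactorial _ _
    have h2 : ((n + 1 : ℕ) : ℝ) ^ l ≤ l.factorial * ((n + l).choose l : ℝ) := by exact_mod_cast h1
    calc ((n + 1 : ℕ) : ℝ) ^ l * r ^ (n + 1)
        ≤ (l.factorial * ((n + l).choose l : ℝ)) * r ^ (n + 1) := by gcongr
      _ = _ := by ring
  have hs1 : Summable (fun n : ℕ => ((n + 1 : ℕ) : ℝ) ^ l * r ^ (n + 1)) :=
    Summable.of_nonneg_of_le (fun n => by positivity) hle (hs.mul_left _)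
  have hs2 : Summable (fun j : ℕ+ => ((j : ℕ) : ℝ) ^ l * r ^ (j : ℕ)) := by
    rw [← Equiv.pnatEquivNat.symm.summable_iff]
    exact hs1
  refine ⟨hs2, ?_⟩
  rw [← Equiv.pnatEquivNat.symm.tsum_eq]
  calc _ = ∑' n : ℕ, ((n + 1 : ℕ) : ℝ) ^ l * r ^ (n + 1) := rfl
    _ ≤ ∑' n : ℕ, (l.factorial * r) * (((n + l).choose l : ℝ) * r ^ n) :=
        hs1.tsum_le_tsum hle (hs.mul_left _)
    _ = _ := by rw [tsum_mul_left, ht]; ring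

/-- Absolute constant in the upper bounds for `Φ_{(l+1)}`. -/
noncomputable def upperC (l : ℕ) : ℝ := l.factorial * ((l + 3).factorial * Real.exp 1)

lemma upperC_pos (l : ℕ) : 0 < upperC l := by unfold upperC; positivity

/-- The sum over `j` in `Φ_{(l+1)}`, with `ρ ^ (p ^ k) = e ^ (-u)`, has size `u ^ (-l-1)` for small
`u` and decays for large `u`; the factor `(1 + u) ^ (-2)` makes the sum over `p` converge. -/
lemma geometric_factor_bound (l : ℕ) {u : ℝ} (hu : 0 < u) :
    l.factorial * (Real.exp (-u) / (1 - Real.exp (-u)) ^ (l + 1)) ≤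
      upperC l * (1 / u ^ (l + 1)) * (1 / (1 + u) ^ 2) := by
  have h1 : u / (1 + u) ≤ 1 - Real.exp (-u) := by
    have : Real.exp (-u) ≤ 1 / (1 + u) := by
      rw [Real.exp_neg, ← one_div]
      apply one_div_le_one_div_of_le (by linarith)
      linarith [Real.add_one_le_exp u]
    have e : u / (1 + u) = 1 - 1 / (1 + u) := by field_simp; ring
    linarith
  have h2 : (1 + u) ^ (l + 3) ≤ (l + 3).factorial * (Real.exp 1 * Real.exp u) := by
    have := Real.pow_div_factorial_le_exp (1 + u) (by linarith) (l + 3)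
    rw [div_le_iff₀ (by positivity), Real.exp_add] at this
    linarith
  unfold upperC
  rw [mul_assoc, mul_assoc]
  gcongr
  calc Real.exp (-u) / (1 - Real.exp (-u)) ^ (l + 1)
      ≤ Real.exp (-u) / (u / (1 + u)) ^ (l + 1) := by gcongr
    _ = ((1 + u) ^ (l + 3) * Real.exp (-u)) * (1 / u ^ (l + 1) * (1 / (1 + u) ^ 2)) := by
        rw [div_pow, show l + 3 = (l + 1) + 2 by ring, pow_add (1 + u) (l + 1) 2]
        field_simp
    _ ≤ ((l + 3).factorial * (Real.exp 1 * Real.exp u) * Real.exp (-u)) *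
          (1 / u ^ (l + 1) * (1 / (1 + u) ^ 2)) := by gcongr
    _ = _ := by
        rw [show (l + 3).factorial * (Real.exp 1 * Real.exp u) * Real.exp (-u) =
          (l + 3).factorial * Real.exp 1 * (Real.exp u * Real.exp (-u)) by ring, ← Real.exp_add]
        simp

lemma sum_inv_sq_shift {A : ℝ} (hA : 1 ≤ A) :
    Summable (fun d : ℕ => 1 / (A + d) ^ 2) ∧ ∑' d : ℕ, 1 / (A + d) ^ 2 ≤ 2 / A := by
  have hp : ∀ D : ℕ, ∑ d ∈ Finset.range D, 1 / (A + d) ^ 2 ≤ 2 / A - 2 / (A + D) := by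
    intro D
    induction D with
    | zero => simp
    | succ D ih =>
      rw [Finset.sum_range_succ]
      have h0 : 0 < A + D := by positivity
      have : 1 / (A + D) ^ 2 ≤ 2 / (A + D) - 2 / (A + (D + 1 : ℕ)) := by
        push_cast
        have h3 : 2 / (A + D) - 2 / (A + (D + 1)) = 2 / ((A + D) * (A + (D + 1))) := by
          have : A + ((D : ℝ) + 1) ≠ 0 := by positivity
          field_simp; ring
        rw [h3, div_le_div_iff₀ (by positivity) (by positivity)]
        nlinarith [show (0 : ℝ) ≤ D by positivity]
      linarith
  have hp' : ∀ D : ℕ, ∑ d ∈ Finset.range D, 1 / (A + d) ^ 2 ≤ 2 / A := fun D => by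
    have : 0 ≤ 2 / (A + D) := by positivity
    linarith [hp D]
  exact ⟨summable_of_sum_range_le (fun d => by positivity) hp',
    Real.tsum_le_of_sum_range_le (fun d => by positivity) hp'⟩

/-- Upper bound `Φ_{(l+1)}(e ^ (-1/X)) ≪ X ^ (l+1) A` for `X ≤ A ^ k`, obtained by extending the
sum over primes to all integers. -/
lemma moment_upper {k : ℕ} (hk : 1 ≤ k) (l : ℕ) {X A : ℝ} (hX : 0 < X) (hA : 1 ≤ A)
    (hXA : X ≤ A ^ k) :
    Summable (fun x => weight k (Real.exp (-1 / X)) x * (freq k x : ℝ) ^ (l + 1)) ∧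
    ∑' x, weight k (Real.exp (-1 / X)) x * (freq k x : ℝ) ^ (l + 1) ≤
      8 * upperC l * X ^ (l + 1) * A := by
  set ρ := Real.exp (-1 / X) with hρ
  set F : Nat.Primes × ℕ+ → ℝ := fun y => weight k ρ y.swap * (freq k y.swap : ℝ) ^ (l + 1) with hF
  have hF0 : ∀ y, 0 ≤ F y := fun y =>
    mul_nonneg (weight_nonneg (Real.exp_pos _) _) (by positivity)
  have hFe : ∀ (p : Nat.Primes) (j : ℕ+), F (p, j) =
      ((p : ℕ) : ℝ) ^ (k * (l + 1)) *
        (((j : ℕ) : ℝ) ^ l * Real.exp (-(((p : ℕ) : ℝ) ^ k / X)) ^ (j : ℕ)) := by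
    intro p j
    have hj : ((j : ℕ) : ℝ) ≠ 0 := by exact_mod_cast j.pos.ne'
    have e : ρ ^ ((j : ℕ) * (p : ℕ) ^ k) = Real.exp (-(((p : ℕ) : ℝ) ^ k / X)) ^ (j : ℕ) := by
      rw [hρ, ← Real.exp_nat_mul, ← Real.exp_nat_mul]
      congr 1; push_cast; ring
    simp only [hF, weight, freq, Prod.swap, e]
    push_cast
    rw [mul_pow, ← pow_mul, pow_succ]
    field_simp
  have hfib : ∀ p : Nat.Primes, Summable (fun j => F (p, j)) ∧
      ∑' j, F (p, j) ≤ 4 * upperC l * X ^ (l + 1) * A ^ 2 * (1 / (A + (p : ℕ)) ^ 2) := by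
    intro p
    have hp0 : (0 : ℝ) < ((p : ℕ) : ℝ) := by exact_mod_cast p.2.pos
    set u := ((p : ℕ) : ℝ) ^ k / X with hu
    have hu0 : 0 < u := by positivity
    obtain ⟨h1, h2⟩ := sum_pnat_pow_geometric l (Real.exp_pos (-u)) (by
      rw [Real.exp_lt_one_iff]; linarith)
    have h3 := h2.trans (geometric_factor_bound l hu0)
    simp_rw [hFe p]
    refine ⟨h1.mul_left _, ?_⟩
    rw [tsum_mul_left]
    have hb : (A + (p : ℕ)) / (2 * A) ≤ 1 + u := by
      have hv : (((p : ℕ) : ℝ) / A) ^ k ≤ u := by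
        rw [hu, div_pow]; gcongr
      have hv2 : (1 + ((p : ℕ) : ℝ) / A) / 2 ≤ 1 + (((p : ℕ) : ℝ) / A) ^ k := by
        rcases le_total (((p : ℕ) : ℝ) / A) 1 with h | h
        · have : 0 ≤ (((p : ℕ) : ℝ) / A) ^ k := by positivity
          linarith
        · have := le_self_pow₀ h (by omega : k ≠ 0)
          linarith
      have e : (A + (p : ℕ)) / (2 * A) = (1 + ((p : ℕ) : ℝ) / A) / 2 := by
        field_simp
      linarith
    calc ((p : ℕ) : ℝ) ^ (k * (l + 1)) * ∑' j : ℕ+, ((j : ℕ) : ℝ) ^ l * Real.exp (-u) ^ (j : ℕ)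
        ≤ ((p : ℕ) : ℝ) ^ (k * (l + 1)) * (upperC l * (1 / u ^ (l + 1)) * (1 / (1 + u) ^ 2)) := by
          gcongr
      _ = upperC l * X ^ (l + 1) * (1 / (1 + u) ^ 2) := by
          have : ((p : ℕ) : ℝ) ^ (k * (l + 1)) = u ^ (l + 1) * X ^ (l + 1) := by
            rw [pow_mul, ← mul_pow, hu]; congr 1; field_simp
          rw [this]; field_simp
      _ ≤ upperC l * X ^ (l + 1) * (1 / ((A + (p : ℕ)) / (2 * A)) ^ 2) := by
          have := (upperC_pos l).le
          gcongr
      _ = _ := by field_simp; ring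
  obtain ⟨hs, ht⟩ := sum_inv_sq_shift hA
  have hinj : Function.Injective (fun p : Nat.Primes => (p : ℕ)) := Subtype.val_injective
  have hs' : Summable (fun p : Nat.Primes => 1 / (A + ((p : ℕ) : ℝ)) ^ 2) := hs.comp_injective hinj
  have ht' : ∑' p : Nat.Primes, 1 / (A + ((p : ℕ) : ℝ)) ^ 2 ≤ 2 / A :=
    (hs'.tsum_le_tsum_of_inj _ hinj (fun d _ => by positivity) (fun p => le_rfl) hs).trans ht
  have hsF : Summable F := by
    rw [summable_prod_of_nonneg hF0]
    refine ⟨fun p => (hfib p).1, ?_⟩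
    exact Summable.of_nonneg_of_le (fun p => tsum_nonneg fun j => hF0 _) (fun p => (hfib p).2)
      (hs'.mul_left _)
  refine ⟨(Equiv.prodComm Nat.Primes ℕ+).summable_iff.mp hsF, ?_⟩
  rw [← (Equiv.prodComm Nat.Primes ℕ+).tsum_eq]
  calc _ = ∑' y, F y := rfl
    _ = ∑' p, ∑' j, F (p, j) := hsF.tsum_prod
    _ ≤ ∑' p : Nat.Primes, 4 * upperC l * X ^ (l + 1) * A ^ 2 * (1 / (A + (p : ℕ)) ^ 2) :=
        hsF.prod.tsum_le_tsum (fun p => (hfib p).2) (hs'.mul_left _)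
    _ ≤ 4 * upperC l * X ^ (l + 1) * A ^ 2 * (2 / A) := by
        rw [tsum_mul_left]
        have := (upperC_pos l).le
        gcongr
    _ = _ := by field_simp; ring

lemma exists_eq_exp {ρ : ℝ} (hρ0 : 0 < ρ) (hρ1 : ρ < 1) :
    0 < -1 / Real.log ρ ∧ ρ = Real.exp (-1 / (-1 / Real.log ρ)) := by
  have := Real.log_neg hρ0 hρ1
  refine ⟨div_pos_of_neg_of_neg (by norm_num) this, ?_⟩
  rw [div_div_eq_mul_div, mul_div_assoc, div_neg, div_one, neg_mul_neg, one_mul, Real.exp_log hρ0]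

lemma summable_moment {k : ℕ} (hk : 1 ≤ k) {ρ : ℝ} (hρ0 : 0 < ρ) (hρ1 : ρ < 1) (m : ℕ) :
    Summable (fun x => weight k ρ x * (freq k x : ℝ) ^ m) := by
  obtain ⟨hX, he⟩ := exists_eq_exp hρ0 hρ1
  set X := -1 / Real.log ρ with hXdef
  have h := (moment_upper hk m hX (le_max_left 1 X) (by
    calc X ≤ max 1 X := le_max_right _ _
      _ ≤ (max 1 X) ^ k := le_self_pow₀ (le_max_left _ _) (by omega))).1
  rw [← he] at h
  refine Summable.of_nonneg_of_le (fun x => mul_nonneg (weight_nonneg hρ0 x) (by positivity))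
    (fun x => ?_) h
  have h1 : (1 : ℝ) ≤ freq k x := by exact_mod_cast one_le_freq k x
  have := weight_nonneg (k := k) hρ0 x
  gcongr
  omega

/-- The iterated sum `Φ_{(m)}` as a moment of `weight` over pairs `(j, p)`. -/
lemma Phim_eq {k : ℕ} (hk : 1 ≤ k) {ρ : ℝ} (hρ0 : 0 < ρ) (hρ1 : ρ < 1) (m : ℕ) :
    Phim k m ρ = ∑' x, weight k ρ x * (freq k x : ℝ) ^ m := by
  rw [(summable_moment hk hρ0 hρ1 m).tsum_prod]
  unfold Phim
  refine tsum_congr fun j => tsum_congr fun p => ?_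
  have hj : ((j : ℕ) : ℝ) ≠ 0 := by exact_mod_cast j.pos.ne'
  simp only [weight, freq]
  push_cast
  rw [zpow_sub₀ hj, zpow_natCast, zpow_one, mul_pow, ← pow_mul]
  field_simp

/-! ### The generating function and Cauchy's formula -/

/-- The sum of the `k`-th powers of the prime factors of `m`, counted with multiplicity. Through
unique factorization, `m ≠ 0` with `primePowSum k m = n` encodes a partition of `n` into `k`-th
powers of primes. -/
def primePowSum (k m : ℕ) : ℕ := (m.primeFactorsList.map (· ^ k)).sum

lemma primePowSum_mul (k : ℕ) {a b : ℕ} (ha : a ≠ 0) (hb : b ≠ 0) :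
    primePowSum k (a * b) = primePowSum k a + primePowSum k b := by
  unfold primePowSum
  rw [((Nat.perm_primeFactorsList_mul ha hb).map _).sum_eq, List.map_append, List.sum_append]

lemma primePowSum_prime (k : ℕ) {p : ℕ} (hp : p.Prime) : primePowSum k p = p ^ k := by
  simp [primePowSum, Nat.primeFactorsList_prime hp]

/-- Unique factorization: `m` corresponds to the partition whose parts are the `k`-th powers of its
prime factors. -/
lemma card_primePowSum {k : ℕ} (hk : 1 ≤ k) (n : ℕ) :
    Nat.card {m : ℕ // m ≠ 0 ∧ primePowSum k m = n} = pPk k n := by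
  have hpow : Function.Injective (fun p : ℕ => p ^ k) := Nat.pow_left_injective (by omega)
  refine Nat.card_eq_of_bijective
    (fun m => ⟨⟨(m.1.primeFactorsList.map (· ^ k) : List ℕ), ?_, ?_⟩, ?_⟩) ⟨?_, ?_⟩
  · intro i hi
    simp only [Multiset.mem_coe, List.mem_map] at hi
    obtain ⟨p, hp, rfl⟩ := hi
    exact pow_pos (Nat.prime_of_mem_primeFactorsList hp).pos k
  · simpa [primePowSum] using m.2.2
  · intro i hi
    simp only [Multiset.mem_coe, List.mem_map] at hi
    obtain ⟨p, hp, rfl⟩ := hi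
    exact ⟨p, Nat.prime_of_mem_primeFactorsList hp, rfl⟩
  · rintro ⟨a, ha, ha'⟩ ⟨b, hb, hb'⟩ h
    simp only [Subtype.mk.injEq, Nat.Partition.mk.injEq] at h
    rw [← Multiset.map_coe, ← Multiset.map_coe] at h
    have h2 := Multiset.map_injective hpow h
    have h3 : a.primeFactorsList.Perm b.primeFactorsList := Multiset.coe_eq_coe.mp h2
    have := h3.prod_eq
    rw [Nat.prod_primeFactorsList ha, Nat.prod_primeFactorsList hb] at this
    simp [this]
  · rintro ⟨⟨s, hs, hsum⟩, hP⟩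
    simp only at hP
    have hroot : ∃ l : List ℕ, (∀ p ∈ l, p.Prime) ∧ ((l.map (· ^ k) : List ℕ) : Multiset ℕ) = s := by
      clear hs hsum
      induction s using Multiset.induction_on with
      | empty => exact ⟨[], by simp, by simp⟩
      | cons a s ih =>
        obtain ⟨l, hl, he⟩ := ih (fun i hi => hP i (Multiset.mem_cons_of_mem hi))
        obtain ⟨p, hp, rfl⟩ := hP a (Multiset.mem_cons_self a s)
        refine ⟨p :: l, ?_, ?_⟩
        · simpa [hp] using hl
        · simp only [List.map_cons, ← Multiset.cons_coe, he]
    obtain ⟨l, hl, rfl⟩ := hroot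
    have hperm := Nat.primeFactorsList_unique rfl hl
    have h0 : l.prod ≠ 0 := by
      intro h
      exact (hl 0 (List.prod_eq_zero_iff.mp h)).ne_zero rfl
    have hmap := (hperm.map (· ^ k))
    refine ⟨⟨l.prod, h0, ?_⟩, ?_⟩
    · unfold primePowSum
      rw [← hmap.sum_eq]
      simpa using hsum
    · simp only [Subtype.mk.injEq, Nat.Partition.mk.injEq]
      exact Multiset.coe_eq_coe.mpr hmap.symm

/-- The completely multiplicative function `m ↦ z ^ primePowSum k m`, with value `0` at `m = 0`. -/
noncomputable def powHom {F : Type*} [Field F] (k : ℕ) (z : F) : ℕ →*₀ F where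
  toFun m := if m = 0 then 0 else z ^ primePowSum k m
  map_zero' := by simp
  map_one' := by simp [primePowSum]
  map_mul' a b := by
    by_cases ha : a = 0
    · simp [ha]
    by_cases hb : b = 0
    · simp [hb]
    simp [ha, hb, primePowSum_mul k ha hb, pow_add]

lemma powHom_apply {F : Type*} [Field F] (k : ℕ) (z : F) (m : ℕ) :
    powHom k z m = if m = 0 then 0 else z ^ primePowSum k m := rfl

lemma powHom_prime {F : Type*} [Field F] (k : ℕ) (z : F) {p : ℕ} (hp : p.Prime) :
    powHom k z p = z ^ p ^ k := by
  simp [powHom_apply, hp.ne_zero, primePowSum_prime k hp]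

lemma norm_powHom (k : ℕ) (z : ℂ) (m : ℕ) : ‖powHom k z m‖ = powHom k ‖z‖ m := by
  simp only [powHom_apply]; split_ifs <;> simp

/-- The partial sums are bounded by finite Euler products, and those by
`exp (∑ ρ ^ p / (1 - ρ))`. -/
lemma summable_powHom {k : ℕ} (hk : 1 ≤ k) {ρ : ℝ} (hρ0 : 0 < ρ) (hρ1 : ρ < 1) :
    Summable (powHom k ρ) := by
  have h0 : ∀ m, 0 ≤ powHom k ρ m := fun m => by
    rw [powHom_apply]; split_ifs <;> positivity
  have hlt : ∀ {p : ℕ}, p.Prime → powHom k ρ p < 1 := fun {p} hp => by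
    rw [powHom_prime k ρ hp]
    exact pow_lt_one₀ hρ0.le hρ1 (pow_pos hp.pos k).ne'
  have hgeo : Summable (fun n : ℕ => ρ ^ n) := summable_geometric_of_lt_one hρ0.le hρ1
  refine summable_of_sum_range_le (c := Real.exp ((1 - ρ)⁻¹ * ∑' n : ℕ, ρ ^ n)) h0 fun M => ?_
  obtain ⟨hs, ht⟩ := EulerProduct.summable_and_hasSum_smoothNumbers_prod_primesBelow_geometric
    (f := (powHom k ρ : ℕ →*₀ ℝ).toMonoidHom) (fun {p} hp => by
      change ‖powHom k ρ p‖ < 1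
      rw [Real.norm_of_nonneg (h0 p)]; exact hlt hp) M
  have h1 : ∑ m ∈ Finset.range M, powHom k ρ m ≤ ∏ p ∈ M.primesBelow, (1 - powHom k ρ p)⁻¹ := by
    have ht' : HasSum (Set.indicator M.smoothNumbers (powHom k ρ))
        (∏ p ∈ M.primesBelow, (1 - powHom k ρ p)⁻¹) := hasSum_subtype_iff_indicator.mp ht
    have h2 := sum_le_hasSum (Finset.range M)
      (fun m _ => Set.indicator_nonneg (fun _ _ => h0 _) m) ht'
    refine le_trans (Finset.sum_le_sum fun m hm => ?_) h2
    rcases Nat.eq_zero_or_pos m with rfl | hm0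
    · rw [map_zero]; exact Set.indicator_nonneg (fun _ _ => h0 _) 0
    · rw [Set.indicator_of_mem (Nat.mem_smoothNumbers_of_lt hm0 (Finset.mem_range.mp hm))]
  refine h1.trans ?_
  calc ∏ p ∈ M.primesBelow, (1 - powHom k ρ p)⁻¹
      ≤ ∏ p ∈ M.primesBelow, Real.exp ((1 - ρ)⁻¹ * ρ ^ p) := by
        refine Finset.prod_le_prod (fun p hp => ?_) (fun p hp => ?_)
        · have := hlt (Nat.prime_of_mem_primesBelow hp)
          exact inv_nonneg.mpr (by linarith)
        · have hp' := Nat.prime_of_mem_primesBelow hp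
          have hx := hlt hp'
          have hxρ : powHom k ρ p ≤ ρ ^ p := by
            rw [powHom_prime k ρ hp']
            exact pow_le_pow_of_le_one hρ0.le hρ1.le (Nat.le_self_pow (by omega) p)
          have hpρ : ρ ^ p ≤ ρ := pow_le_of_le_one hρ0.le hρ1.le hp'.ne_zero
          set x := powHom k ρ p
          have hx1 : 0 < 1 - x := by linarith
          calc (1 - x)⁻¹ = 1 + (1 - x)⁻¹ * x := by field_simp; ring
            _ ≤ Real.exp ((1 - x)⁻¹ * x) := by linarith [Real.add_one_le_exp ((1 - x)⁻¹ * x)]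
            _ ≤ _ := by
              apply Real.exp_le_exp.mpr
              have : (1 - x)⁻¹ ≤ (1 - ρ)⁻¹ := by
                apply inv_anti₀ (by linarith); linarith
              have h3 : 0 ≤ x := h0 p
              have h4 : 0 ≤ (1 - ρ)⁻¹ := inv_nonneg.mpr (by linarith)
              gcongr
    _ = Real.exp ((1 - ρ)⁻¹ * ∑ p ∈ M.primesBelow, ρ ^ p) := by
        rw [← Real.exp_sum, Finset.mul_sum]
    _ ≤ _ := by
        have h4 : 0 ≤ (1 - ρ)⁻¹ := inv_nonneg.mpr (by linarith)
        gcongr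
        exact hgeo.sum_le_tsum _ (fun n _ => by positivity)

lemma summable_weight_cexp {k : ℕ} (hk : 1 ≤ k) {ρ : ℝ} (hρ0 : 0 < ρ) (hρ1 : ρ < 1) (t : ℝ) :
    Summable (fun x => (weight k ρ x : ℂ) * Complex.exp (t * freq k x * Complex.I)) := by
  apply Summable.of_norm
  have := summable_moment hk hρ0 hρ1 0
  simp only [pow_zero, mul_one] at this
  refine this.congr fun x => ?_
  rw [norm_mul, show (t * freq k x * Complex.I : ℂ) = ((t * freq k x : ℝ) : ℂ) * Complex.I by
    push_cast; ring, Complex.norm_exp_ofReal_mul_I, mul_one, Complex.norm_real,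
    Real.norm_of_nonneg (weight_nonneg hρ0 x)]

/-- The Euler product: `Ψ (ρ e ^ (i t))` is the generating series of `primePowSum`. -/
lemma exp_weight_eq_tsum {k : ℕ} (hk : 1 ≤ k) {ρ : ℝ} (hρ0 : 0 < ρ) (hρ1 : ρ < 1) (t : ℝ) :
    Complex.exp (∑' x, (weight k ρ x : ℂ) * Complex.exp (t * freq k x * Complex.I)) =
      ∑' m : ℕ, powHom k ((ρ : ℂ) * Complex.exp (t * Complex.I)) m := by
  set z : ℂ := (ρ : ℂ) * Complex.exp (t * Complex.I) with hz
  have hzn : ‖z‖ = ρ := by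
    rw [hz, norm_mul, Complex.norm_exp_ofReal_mul_I, mul_one, Complex.norm_real,
      Real.norm_of_nonneg hρ0.le]
  have hsum : Summable (fun m => ‖powHom k z m‖) := by
    simp_rw [norm_powHom, hzn]; exact summable_powHom hk hρ0 hρ1
  rw [← EulerProduct.exp_tsum_primes_log_eq_tsum hsum]
  congr 1
  have hs := summable_weight_cexp hk hρ0 hρ1 t
  have hs' := ((Equiv.prodComm Nat.Primes ℕ+).summable_iff.mpr hs).tsum_prod
  rw [← (Equiv.prodComm Nat.Primes ℕ+).tsum_eq]
  refine hs'.trans ?_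
  refine tsum_congr fun p => ?_
  have hp : ‖powHom k z (p : ℕ)‖ < 1 := by
    rw [norm_powHom, hzn, powHom_prime k ρ p.2]
    exact pow_lt_one₀ hρ0.le hρ1 (pow_pos p.2.pos k).ne'
  have h1 := Complex.hasSum_taylorSeries_neg_log hp
  have h2 : HasSum (fun j : ℕ+ => powHom k z (p : ℕ) ^ (j : ℕ) / ((j : ℕ) : ℂ))
      (-Complex.log (1 - powHom k z (p : ℕ))) := by
    refine (PNat.coe_injective.hasSum_iff ?_).mpr h1
    intro j hj
    have : j = 0 := by
      by_contra h
      exact hj ⟨⟨j, Nat.pos_of_ne_zero h⟩, rfl⟩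
    simp [this]
  rw [← h2.tsum_eq]
  refine tsum_congr fun j => ?_
  simp only [Function.comp, Equiv.coe_prodComm, Prod.swap, weight, freq]
  rw [powHom_prime k z p.2, ← pow_mul, hz, mul_pow, ← Complex.exp_nat_mul, mul_comm (j : ℕ)]
  push_cast
  rw [show (((p : ℕ) : ℂ) ^ k * ((j : ℕ) : ℂ)) * ((t : ℂ) * Complex.I) =
    t * (((p : ℕ) : ℂ) ^ k * ((j : ℕ) : ℂ)) * Complex.I by ring]
  ring

lemma integral_cexp_int (d : ℤ) :
    ∫ t in (-Real.pi)..Real.pi, Complex.exp ((d : ℂ) * Complex.I * (t : ℂ)) =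
      if d = 0 then 2 * (Real.pi : ℂ) else 0 := by
  split_ifs with h
  · subst h
    simp
    ring
  · rw [integral_exp_mul_complex (mul_ne_zero (by exact_mod_cast h) Complex.I_ne_zero)]
    have : Complex.exp ((d : ℂ) * Complex.I * (Real.pi : ℝ)) =
        Complex.exp ((d : ℂ) * Complex.I * (-Real.pi : ℝ)) := by
      rw [Complex.exp_eq_exp_iff_exists_int]
      exact ⟨d, by push_cast; ring⟩
    rw [this]; simp

/-- Cauchy's formula on the circle of radius `ρ`. -/
lemma cauchy_formula {k : ℕ} (hk : 1 ≤ k) {ρ : ℝ} (hρ0 : 0 < ρ) (hρ1 : ρ < 1) (n : ℕ) :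
    ∫ t in (-Real.pi)..Real.pi,
      Complex.exp (∑' x, (weight k ρ x : ℂ) * Complex.exp (t * freq k x * Complex.I)) *
        Complex.exp (-(n * t * Complex.I)) = 2 * Real.pi * (ρ : ℂ) ^ n * pPk k n := by
  have hn : ∀ (t : ℝ) (m : ℕ), ‖powHom k ((ρ : ℂ) * Complex.exp (t * Complex.I)) m‖ =
      powHom k ρ m := by
    intro t m
    rw [norm_powHom, norm_mul, Complex.norm_exp_ofReal_mul_I, mul_one, Complex.norm_real,
      Real.norm_of_nonneg hρ0.le]
  have hn2 : ∀ t : ℝ, ‖Complex.exp (-(n * t * Complex.I))‖ = 1 := by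
    intro t
    rw [show (-(n * t * Complex.I) : ℂ) = ((-(n * t) : ℝ) : ℂ) * Complex.I by push_cast; ring,
      Complex.norm_exp_ofReal_mul_I]
  have hS := summable_powHom hk hρ0 hρ1
  have key := intervalIntegral.hasSum_integral_of_dominated_convergence
    (a := -Real.pi) (b := Real.pi) (μ := MeasureTheory.volume)
    (F := fun (m : ℕ) (t : ℝ) => powHom k ((ρ : ℂ) * Complex.exp (t * Complex.I)) m *
      Complex.exp (-(n * t * Complex.I)))
    (f := fun t : ℝ => Complex.exp
      (∑' x, (weight k ρ x : ℂ) * Complex.exp (t * freq k x * Complex.I)) *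
        Complex.exp (-(n * t * Complex.I)))
    (fun m _ => powHom k ρ m) ?_ ?_ ?_ ?_ ?_
  · have hmode : ∀ m : ℕ, ∫ t in (-Real.pi)..Real.pi,
        powHom k ((ρ : ℂ) * Complex.exp (t * Complex.I)) m * Complex.exp (-(n * t * Complex.I)) =
        Set.indicator {m : ℕ | m ≠ 0 ∧ primePowSum k m = n}
          (fun _ => 2 * Real.pi * (ρ : ℂ) ^ n) m := by
      intro m
      by_cases hm : m = 0
      · simp [hm]
      have e : ∀ t : ℝ, powHom k ((ρ : ℂ) * Complex.exp (t * Complex.I)) m *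
          Complex.exp (-(n * t * Complex.I)) = (ρ : ℂ) ^ primePowSum k m *
          Complex.exp ((((primePowSum k m : ℤ) - (n : ℤ) : ℤ) : ℂ) * Complex.I * t) := by
        intro t
        rw [powHom_apply, if_neg hm, mul_pow, ← Complex.exp_nat_mul, mul_assoc, ← Complex.exp_add]
        congr 2
        push_cast; ring
      simp_rw [e]
      rw [intervalIntegral.integral_const_mul, integral_cexp_int]
      by_cases h : primePowSum k m = n
      · rw [Set.indicator_of_mem (by exact ⟨hm, h⟩), if_pos (by omega), h]; ring
      · rw [Set.indicator_of_notMem (by simp [h]), if_neg (by omega), mul_zero]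
    simp_rw [hmode] at key
    rw [← key.tsum_eq, ← tsum_subtype, tsum_const, ← card_primePowSum hk n, nsmul_eq_mul]
    change ((Nat.card {m : ℕ // m ≠ 0 ∧ primePowSum k m = n} : ℕ) : ℂ) * _ = _
    ring
  · intro m
    apply Continuous.aestronglyMeasurable
    simp only [powHom_apply]
    split_ifs <;> fun_prop
  · intro m
    exact Filter.Eventually.of_forall fun t _ => by rw [norm_mul, hn, hn2, mul_one]
  · exact Filter.Eventually.of_forall fun t _ => hS
  · exact intervalIntegrable_const
  · refine Filter.Eventually.of_forall fun t _ => ?_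
    have h1 : Summable (fun m => powHom k ((ρ : ℂ) * Complex.exp (t * Complex.I)) m) := by
      apply Summable.of_norm
      simp_rw [hn]; exact hS
    rw [exp_weight_eq_tsum hk hρ0 hρ1 t]
    exact h1.hasSum.mul_right _

/-! ### The saddle point integrand -/

lemma norm_cexp_taylor_le (x : ℝ) :
    ‖Complex.exp (x * Complex.I) - 1 - x * Complex.I + (x : ℂ) ^ 2 / 2‖ ≤ 4 * |x| ^ 3 := by
  have hI : ‖(x : ℂ) * Complex.I‖ = |x| := by simp
  rcases le_total |x| 1 with h | h
  · have h1 := Complex.exp_bound (x := x * Complex.I) (by rw [hI]; exact h) (n := 3) (by norm_num)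
    rw [hI] at h1
    simp only [Finset.sum_range_succ, Finset.sum_range_zero] at h1
    norm_num [Nat.factorial] at h1
    rw [mul_pow, Complex.I_sq] at h1
    have e : Complex.exp (x * Complex.I) - 1 - x * Complex.I + (x : ℂ) ^ 2 / 2 =
        Complex.exp (x * Complex.I) - (1 + x * Complex.I + (x : ℂ) ^ 2 * -1 / 2) := by ring
    rw [e]
    refine h1.trans ?_
    have : 0 ≤ |x| ^ 3 := by positivity
    linarith
  · have h2 : |x| ≤ |x| ^ 3 := le_self_pow₀ h (by norm_num)
    have h3 : |x| ^ 2 ≤ |x| ^ 3 := pow_le_pow_right₀ h (by norm_num)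
    have h4 : 1 ≤ |x| ^ 3 := one_le_pow₀ h
    calc _ ≤ ‖Complex.exp (x * Complex.I)‖ + ‖(1 : ℂ)‖ + ‖x * Complex.I‖ + ‖(x : ℂ) ^ 2 / 2‖ := by
          refine (norm_add_le _ _).trans ?_
          gcongr
          refine (norm_sub_le _ _).trans ?_
          gcongr
          exact norm_sub_le _ _
      _ = 1 + 1 + |x| + |x| ^ 2 / 2 := by
          rw [Complex.norm_exp_ofReal_mul_I, hI]; simp
      _ ≤ _ := by linarith

/-- The integrand of Cauchy's formula at the saddle point, normalized to have value `1` at `t = 0`: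
`Ψ(ρ e ^ (i t)) / Ψ(ρ) * e ^ (-i t Φ_{(1)}(ρ))`. -/
noncomputable def saddle (k : ℕ) (ρ t : ℝ) : ℂ :=
  Complex.exp (∑' x, (weight k ρ x : ℂ) * Complex.exp (t * freq k x * Complex.I)
    - Phim k 0 ρ - Phim k 1 ρ * t * Complex.I)

lemma hasSum_Phim {k : ℕ} (hk : 1 ≤ k) {ρ : ℝ} (hρ0 : 0 < ρ) (hρ1 : ρ < 1)
    (m : ℕ) :
    HasSum (fun x => weight k ρ x * (freq k x : ℝ) ^ m) (Phim k m ρ) := by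
  rw [Phim_eq hk hρ0 hρ1]
  exact (summable_moment hk hρ0 hρ1 m).hasSum

lemma hasSum_Phim_complex {k : ℕ} (hk : 1 ≤ k) {ρ : ℝ} (hρ0 : 0 < ρ) (hρ1 : ρ < 1)
    (m : ℕ) :
    HasSum (fun x => (weight k ρ x : ℂ) * (freq k x : ℂ) ^ m) (Phim k m ρ : ℂ) := by
  have := (Complex.hasSum_ofReal (L := .unconditional _)).mpr (hasSum_Phim hk hρ0 hρ1 m)
  simpa using this

lemma continuous_saddle {k : ℕ} (hk : 1 ≤ k) {ρ : ℝ} (hρ0 : 0 < ρ) (hρ1 : ρ < 1)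
    : Continuous (saddle k ρ) := by
  unfold saddle
  have h0 := summable_moment hk hρ0 hρ1 0
  simp only [pow_zero, mul_one] at h0
  have : Continuous (fun t : ℝ =>
      ∑' x, (weight k ρ x : ℂ) * Complex.exp (t * freq k x * Complex.I)) := by
    refine continuous_tsum (fun x => by fun_prop) h0 fun x t => ?_
    rw [norm_mul, show (t * freq k x * Complex.I : ℂ) = ((t * freq k x : ℝ) : ℂ) * Complex.I by
      push_cast; ring, Complex.norm_exp_ofReal_mul_I, mul_one, Complex.norm_real,
      Real.norm_of_nonneg (weight_nonneg hρ0 x)]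
  fun_prop

/-- Cauchy's formula for the normalized integrand; the saddle point equation `Φ_{(1)}(ρ) = n`
identifies the linear phase with `e ^ (-i n t)`. -/
lemma integral_saddle {k : ℕ} (hk : 1 ≤ k) {ρ : ℝ} (hρ0 : 0 < ρ) (hρ1 : ρ < 1)
    {n : ℕ} (hn : Phim k 1 ρ = n) :
    ∫ t in (-Real.pi)..Real.pi, saddle k ρ t =
      ((2 * Real.pi * ρ ^ n * pPk k n * Real.exp (-Phim k 0 ρ) : ℝ) : ℂ) := by
  have e : ∀ t : ℝ, saddle k ρ t =
      (Complex.exp (∑' x, (weight k ρ x : ℂ) * Complex.exp (t * freq k x * Complex.I)) *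
        Complex.exp (-(n * t * Complex.I))) * Complex.exp (-(Phim k 0 ρ : ℂ)) := by
    intro t
    rw [saddle, hn, ← Complex.exp_add, ← Complex.exp_add]
    congr 1
    push_cast; ring
  simp_rw [e]
  rw [intervalIntegral.integral_mul_const, cauchy_formula hk hρ0 hρ1 n]
  push_cast; ring

/-- Major arc: in the Taylor expansion of `Φ(ρ e ^ (i t))` the linear term cancels, the quadratic
one gives the Gaussian, and the cubic remainder is at most `4 Φ_{(3)}(ρ) |t| ^ 3`. -/
lemma saddle_near {k : ℕ} (hk : 1 ≤ k) {ρ : ℝ} (hρ0 : 0 < ρ) (hρ1 : ρ < 1)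
    {t : ℝ} (h : 4 * Phim k 3 ρ * |t| ^ 3 ≤ 1) :
    ‖saddle k ρ t - (Real.exp (-(Phim k 2 ρ / 2) * t ^ 2) : ℝ)‖ ≤
      8 * Phim k 3 ρ * |t| ^ 3 * Real.exp (-(Phim k 2 ρ / 2) * t ^ 2) := by
  set S := ∑' x, (weight k ρ x : ℂ) * Complex.exp (t * freq k x * Complex.I) with hS
  set R : ℂ := S - Phim k 0 ρ - Phim k 1 ρ * t * Complex.I + Phim k 2 ρ * t ^ 2 / 2 with hR
  have hsumR : HasSum (fun x => (weight k ρ x : ℂ) *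
      (Complex.exp ((t * freq k x : ℝ) * Complex.I) - 1 - (t * freq k x : ℝ) * Complex.I +
        ((t * freq k x : ℝ) : ℂ) ^ 2 / 2)) R := by
    have h0 := (summable_weight_cexp hk hρ0 hρ1 t).hasSum
    have h1 := hasSum_Phim_complex hk hρ0 hρ1 0
    have h2 := (hasSum_Phim_complex hk hρ0 hρ1 1).mul_right (t * Complex.I)
    have h3 := (hasSum_Phim_complex hk hρ0 hρ1 2).mul_right ((t : ℂ) ^ 2 / 2)
    convert! ((h0.sub h1).sub h2).add h3 using 1
    · funext x
      push_cast; ring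
    · rw [hR]; ring
  have hsum3 : HasSum (fun x => weight k ρ x * (4 * |t * freq k x| ^ 3))
      (4 * Phim k 3 ρ * |t| ^ 3) := by
    convert! (hasSum_Phim hk hρ0 hρ1 3).mul_right (4 * |t| ^ 3) using 1
    · funext x
      rw [abs_mul, Nat.abs_cast]; ring
    · ring
  have hRb : ‖R‖ ≤ 4 * Phim k 3 ρ * |t| ^ 3 := by
    rw [← hsumR.tsum_eq]
    refine tsum_of_norm_bounded hsum3 fun x => ?_
    rw [norm_mul, Complex.norm_real, Real.norm_of_nonneg (weight_nonneg hρ0 x)]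
    exact mul_le_mul_of_nonneg_left (norm_cexp_taylor_le _) (weight_nonneg hρ0 x)
  have e : saddle k ρ t - (Real.exp (-(Phim k 2 ρ / 2) * t ^ 2) : ℝ) =
      (Real.exp (-(Phim k 2 ρ / 2) * t ^ 2) : ℝ) * (Complex.exp R - 1) := by
    rw [mul_sub, mul_one, Complex.ofReal_exp, ← Complex.exp_add, saddle, ← hS, hR]
    congr 2
    push_cast; ring
  rw [e, norm_mul, Complex.norm_real, Real.norm_of_nonneg (Real.exp_pos _).le, mul_comm]
  gcongr
  calc ‖Complex.exp R - 1‖ ≤ 2 * ‖R‖ := Complex.norm_exp_sub_one_le (hRb.trans h)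
    _ ≤ _ := by linarith

/-- Decay of the integrand: `-log ‖saddle‖` is a series with nonnegative terms, so it is at least any
of its finite partial sums. -/
lemma norm_saddle_le {k : ℕ} (hk : 1 ≤ k) {ρ : ℝ} (hρ0 : 0 < ρ) (hρ1 : ρ < 1)
    {t K : ℝ} (s : Finset (ℕ+ × Nat.Primes))
    (h : K ≤ ∑ x ∈ s, weight k ρ x * (1 - Real.cos (t * freq k x))) :
    ‖saddle k ρ t‖ ≤ Real.exp (-K) := by
  have h0 := (summable_weight_cexp hk hρ0 hρ1 t).hasSum
  have h1 := Complex.hasSum_re h0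
  have h2 := hasSum_Phim hk hρ0 hρ1 0
  have h3 : HasSum (fun x => weight k ρ x * (1 - Real.cos (t * freq k x)))
      (Phim k 0 ρ - (∑' x, (weight k ρ x : ℂ) * Complex.exp (t * freq k x * Complex.I)).re) := by
    convert! h2.sub h1 using 1
    funext x
    rw [Complex.re_ofReal_mul, show (t * freq k x * Complex.I : ℂ) =
      ((t * freq k x : ℝ) : ℂ) * Complex.I by push_cast; ring, Complex.exp_ofReal_mul_I_re]
    ring
  have h4 := sum_le_hasSum s (fun x _ => mul_nonneg (weight_nonneg hρ0 x)
    (by linarith [Real.cos_le_one (t * freq k x)])) h3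
  rw [saddle, Complex.norm_exp]
  apply Real.exp_le_exp.mpr
  simp only [Complex.sub_re, Complex.ofReal_re, Complex.mul_re, Complex.I_re, Complex.ofReal_im,
    Complex.I_im, Complex.mul_im]
  linarith

/-- The integral of a function close to a Gaussian on `[-t₀, t₀]` and small on the rest of `[-π, π]`.
The last error term is the mass of the Gaussian outside `[-t₀, t₀]`. -/
lemma gaussian_comparison {G : ℝ → ℂ} (hG : Continuous G) {V t₀ r s : ℝ} (hV : 0 < V)
    (ht₀ : 0 ≤ t₀) (ht₀π : t₀ ≤ Real.pi) (hr : 0 ≤ r) (hs : 0 ≤ s)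
    (h1 : ∀ t, |t| ≤ t₀ → ‖G t - (Real.exp (-(V / 2) * t ^ 2) : ℝ)‖ ≤
      r * Real.exp (-(V / 2) * t ^ 2))
    (h2 : ∀ t, t₀ < |t| → |t| ≤ Real.pi → ‖G t‖ ≤ s) :
    ‖(∫ t in (-Real.pi)..Real.pi, G t) - (Real.sqrt (2 * Real.pi / V) : ℝ)‖ ≤
      r * Real.sqrt (2 * Real.pi / V) + 2 * Real.pi * s +
        Real.exp (-(V * t₀ ^ 2 / 4)) * Real.sqrt (4 * Real.pi / V) := by
  have hπ := Real.pi_pos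
  have hg := integrable_exp_neg_mul_sq (show 0 < V / 2 by positivity)
  have hg4 := integrable_exp_neg_mul_sq (show 0 < V / 4 by positivity)
  have hgi := integral_gaussian (V / 2)
  have hg4i := integral_gaussian (V / 4)
  rw [show Real.pi / (V / 2) = 2 * Real.pi / V by field_simp] at hgi
  rw [show Real.pi / (V / 4) = 4 * Real.pi / V by field_simp] at hg4i
  have hGi : MeasureTheory.Integrable (Set.indicator (Set.Icc (-Real.pi) Real.pi) G) := by
    rw [MeasureTheory.integrable_indicator_iff measurableSet_Icc]
    exact hG.continuousOn.integrableOn_Icc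
  have hsi : MeasureTheory.Integrable
      (Set.indicator (Set.Icc (-Real.pi) Real.pi) (fun _ : ℝ => s)) := by
    rw [MeasureTheory.integrable_indicator_iff measurableSet_Icc]
    exact continuous_const.continuousOn.integrableOn_Icc
  have hsI : ∫ t, Set.indicator (Set.Icc (-Real.pi) Real.pi) (fun _ : ℝ => s) t =
      2 * Real.pi * s := by
    rw [MeasureTheory.integral_indicator measurableSet_Icc, MeasureTheory.setIntegral_const,
      Real.volume_real_Icc_of_le (by linarith), smul_eq_mul]
    ring
  have e : (∫ t in (-Real.pi)..Real.pi, G t) - (Real.sqrt (2 * Real.pi / V) : ℝ) =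
      ∫ t, (Set.indicator (Set.Icc (-Real.pi) Real.pi) G t -
        ((Real.exp (-(V / 2) * t ^ 2) : ℝ) : ℂ)) := by
    have hgc : MeasureTheory.Integrable
        (fun t : ℝ => ((Real.exp (-(V / 2) * t ^ 2) : ℝ) : ℂ)) := hg.ofReal
    rw [MeasureTheory.integral_sub hGi hgc, integral_complex_ofReal, hgi,
      MeasureTheory.integral_indicator measurableSet_Icc,
      intervalIntegral.integral_of_le (by linarith), MeasureTheory.integral_Icc_eq_integral_Ioc]
  rw [e]
  have hb : ∫ t, (r * Real.exp (-(V / 2) * t ^ 2) +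
      Set.indicator (Set.Icc (-Real.pi) Real.pi) (fun _ : ℝ => s) t +
      Real.exp (-(V * t₀ ^ 2 / 4)) * Real.exp (-(V / 4) * t ^ 2)) =
      r * Real.sqrt (2 * Real.pi / V) + 2 * Real.pi * s +
        Real.exp (-(V * t₀ ^ 2 / 4)) * Real.sqrt (4 * Real.pi / V) := by
    have h12 : MeasureTheory.Integrable (fun t : ℝ => r * Real.exp (-(V / 2) * t ^ 2) +
        Set.indicator (Set.Icc (-Real.pi) Real.pi) (fun _ : ℝ => s) t) := (hg.const_mul r).add hsi
    rw [MeasureTheory.integral_add h12 (hg4.const_mul _),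
      MeasureTheory.integral_add (hg.const_mul r) hsi, MeasureTheory.integral_const_mul,
      MeasureTheory.integral_const_mul, hgi, hg4i, hsI]
  rw [← hb]
  refine MeasureTheory.norm_integral_le_of_norm_le
    (((hg.const_mul r).add hsi).add (hg4.const_mul _)) (Eventually.of_forall fun t => ?_)
  have hi0 : 0 ≤ Set.indicator (Set.Icc (-Real.pi) Real.pi) (fun _ : ℝ => s) t :=
    Set.indicator_nonneg (fun _ _ => hs) t
  have hr0 : 0 ≤ r * Real.exp (-(V / 2) * t ^ 2) := by positivity
  have htail : t₀ ≤ |t| → Real.exp (-(V / 2) * t ^ 2) ≤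
      Real.exp (-(V * t₀ ^ 2 / 4)) * Real.exp (-(V / 4) * t ^ 2) := by
    intro h
    rw [← Real.exp_add]
    apply Real.exp_le_exp.mpr
    have : t₀ ^ 2 ≤ t ^ 2 := by rw [← sq_abs t]; gcongr
    nlinarith
  have hnorm : ‖((Real.exp (-(V / 2) * t ^ 2) : ℝ) : ℂ)‖ = Real.exp (-(V / 2) * t ^ 2) := by
    rw [Complex.norm_real, Real.norm_of_nonneg (Real.exp_pos _).le]
  by_cases htπ : |t| ≤ Real.pi
  · have hmem : t ∈ Set.Icc (-Real.pi) Real.pi := abs_le.mp htπ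
    rw [Set.indicator_of_mem hmem, Set.indicator_of_mem hmem]
    rcases le_or_gt |t| t₀ with h | h
    · have := h1 t h
      have : 0 ≤ Real.exp (-(V * t₀ ^ 2 / 4)) * Real.exp (-(V / 4) * t ^ 2) := by positivity
      linarith
    · have h3 := h2 t h htπ
      have h4 := htail h.le
      have h5 := norm_sub_le (G t) ((Real.exp (-(V / 2) * t ^ 2) : ℝ) : ℂ)
      rw [hnorm] at h5
      linarith
  · have hmem : t ∉ Set.Icc (-Real.pi) Real.pi := fun h => htπ (abs_le.mpr h)
    rw [Set.indicator_of_notMem hmem, zero_sub, norm_neg, hnorm]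
    have := htail (by linarith [not_le.mp htπ])
    linarith

lemma distInt_sq_le_one_sub_cos (y : ℝ) :
    8 * distInt y ^ 2 ≤ 1 - Real.cos (2 * Real.pi * y) := by
  have hπ := Real.pi_pos
  have h1 : Real.cos (2 * Real.pi * y) = Real.cos (2 * Real.pi * (y - round y)) := by
    rw [mul_sub, show 2 * Real.pi * ((round y : ℤ) : ℝ) = (round y : ℤ) * (2 * Real.pi) by ring,
      Real.cos_sub_int_mul_two_pi]
  have h2 : |2 * Real.pi * (y - round y)| ≤ Real.pi := by
    rw [abs_mul, abs_of_pos (by positivity)]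
    have := abs_sub_round y
    nlinarith
  have h3 := Real.cos_le_one_sub_mul_cos_sq h2
  rw [h1, distInt, sq_abs]
  have : 2 / Real.pi ^ 2 * (2 * Real.pi * (y - round y)) ^ 2 = 8 * (y - round y) ^ 2 := by
    field_simp; ring
  linarith

/-! ### The relative error -/

lemma Phim_upper {k : ℕ} (hk : 1 ≤ k) (l : ℕ) {X : ℝ} {N : ℕ} (hX : 0 < X)
    (hXN : X ≤ ((N : ℝ) + 1) ^ k) :
    Phim k (l + 1) (Real.exp (-1 / X)) ≤ 8 * upperC l * ((N : ℝ) + 1) ^ (k * (l + 1) + 1) := by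
  have h1 : Real.exp (-1 / X) < 1 := by
    rw [Real.exp_lt_one_iff]; exact div_neg_of_neg_of_pos (by norm_num) hX
  rw [Phim_eq hk (Real.exp_pos _) h1]
  refine (moment_upper hk l hX (by linarith [show (0 : ℝ) ≤ N by positivity]) hXN).2.trans ?_
  have := (upperC_pos l).le
  rw [pow_succ _ (k * (l + 1)), pow_mul, ← mul_assoc]
  gcongr

/-- The indices `(1, p)` with `p ≤ N ≤ X ^ (1/k)` have weight `e ^ (-p ^ k / X) ≥ e⁻¹`. -/
lemma exists_finset_weight_lower {k : ℕ} {X : ℝ} {N : ℕ} (hX : 0 < X) (hNX : (N : ℝ) ^ k ≤ X) :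
    ∃ s : Finset (ℕ+ × Nat.Primes), ∀ h : ℕ → ℝ, (∀ f, 0 ≤ h f) →
      Real.exp (-1) * ∑ p ∈ Nat.primesLE N, h (p ^ k) ≤
        ∑ x ∈ s, weight k (Real.exp (-1 / X)) x * h (freq k x) := by
  classical
  set e : {p // p ∈ Nat.primesLE N} → ℕ+ × Nat.Primes :=
    fun p => (1, ⟨p.1, (Nat.mem_primesLE.mp p.2).2⟩) with he
  have hinj : Function.Injective e := by
    intro a b hab
    have h2 := congrArg (fun x : ℕ+ × Nat.Primes => (x.2 : ℕ)) hab
    exact Subtype.ext h2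
  refine ⟨(Nat.primesLE N).attach.image e, fun h hh => ?_⟩
  rw [Finset.sum_image hinj.injOn, ← Finset.sum_attach, Finset.mul_sum]
  refine Finset.sum_le_sum fun p _ => ?_
  have hpN : (p : ℕ) ≤ N := (Nat.mem_primesLE.mp p.2).1
  have hf : freq k (e p) = (p : ℕ) ^ k := by simp [he, freq]
  have hw : weight k (Real.exp (-1 / X)) (e p) = Real.exp (-1 / X) ^ (p : ℕ) ^ k := by
    rw [weight, hf]; simp [he]
  rw [hf, hw]
  refine mul_le_mul_of_nonneg_right ?_ (hh _)
  rw [← Real.exp_nat_mul]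
  apply Real.exp_le_exp.mpr
  have h1 : (((p : ℕ) ^ k : ℕ) : ℝ) ≤ X := by
    push_cast
    refine le_trans ?_ hNX
    gcongr
  rw [← mul_div_assoc, le_div_iff₀ hX]
  linarith

/-- The relative error in the saddle point approximation of `p_{ℙ_k}(n)`. -/
noncomputable def saddleError (k : ℕ) (ρ : ℝ) (n : ℕ) : ℝ :=
  Real.sqrt (2 * Real.pi * Phim k 2 ρ) * (ρ ^ n * pPk k n * Real.exp (-Phim k 0 ρ)) - 1

/-- The error splits into the cubic Taylor remainder on `[-t₀, t₀]`, the contribution of the minor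
arcs, and the tail of the Gaussian. -/
lemma saddleError_le {k : ℕ} (hk : 1 ≤ k) {ρ : ℝ} (hρ0 : 0 < ρ) (hρ1 : ρ < 1) {n : ℕ}
    (hn : Phim k 1 ρ = n) {t₀ r s : ℝ} (hV : 0 < Phim k 2 ρ)
    (ht₀ : 0 ≤ t₀) (ht₀π : t₀ ≤ Real.pi) (hs : 0 ≤ s)
    (hW0 : 0 ≤ Phim k 3 ρ) (hW : 4 * Phim k 3 ρ * t₀ ^ 3 ≤ 1) (hr : 8 * Phim k 3 ρ * t₀ ^ 3 ≤ r)
    (h2 : ∀ t, t₀ < |t| → |t| ≤ Real.pi → ‖saddle k ρ t‖ ≤ s) :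
    |saddleError k ρ n| ≤ r + Real.sqrt (2 * Real.pi * Phim k 2 ρ) * s +
      2 * Real.exp (-(Phim k 2 ρ * t₀ ^ 2 / 4)) := by
  have hπ := Real.pi_pos
  have hr0 : 0 ≤ r := le_trans (by positivity) hr
  have key := gaussian_comparison (continuous_saddle hk hρ0 hρ1) hV ht₀ ht₀π hr0 hs
    (fun t ht => by
      have h3 : |t| ^ 3 ≤ t₀ ^ 3 := by gcongr
      refine (saddle_near hk hρ0 hρ1 (le_trans (by gcongr) hW)).trans ?_
      gcongr
      exact le_trans (by gcongr) hr) h2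
  rw [integral_saddle hk hρ0 hρ1 hn, ← Complex.ofReal_sub, Complex.norm_real,
    Real.norm_eq_abs] at key
  set V := Phim k 2 ρ with hVdef
  set Y := ρ ^ n * pPk k n * Real.exp (-Phim k 0 ρ) with hY
  set c := Real.sqrt (2 * Real.pi * V) / (2 * Real.pi) with hc
  have hc0 : 0 ≤ c := by positivity
  have hc1 : c * Real.sqrt (2 * Real.pi / V) = 1 := by
    rw [hc, div_mul_eq_mul_div, ← Real.sqrt_mul (by positivity),
      show 2 * Real.pi * V * (2 * Real.pi / V) = (2 * Real.pi) ^ 2 by field_simp,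
      Real.sqrt_sq (by positivity)]
    field_simp
  have hc2 : c * Real.sqrt (4 * Real.pi / V) ≤ 2 := by
    have : Real.sqrt (4 * Real.pi / V) = Real.sqrt 2 * Real.sqrt (2 * Real.pi / V) := by
      rw [← Real.sqrt_mul (by norm_num)]
      congr 1; ring
    rw [this, show c * (Real.sqrt 2 * Real.sqrt (2 * Real.pi / V)) =
      Real.sqrt 2 * (c * Real.sqrt (2 * Real.pi / V)) by ring, hc1, mul_one]
    exact Real.sqrt_le_iff.mpr (by norm_num)
  have hE : saddleError k ρ n =
      c * (2 * Real.pi * ρ ^ n * pPk k n * Real.exp (-Phim k 0 ρ) -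
        Real.sqrt (2 * Real.pi / V)) := by
    rw [mul_sub, hc1, saddleError, ← hVdef, ← hY, hc, hY]
    field_simp
  rw [hE, abs_mul, abs_of_nonneg hc0]
  calc _ ≤ c * (r * Real.sqrt (2 * Real.pi / V) + 2 * Real.pi * s +
        Real.exp (-(V * t₀ ^ 2 / 4)) * Real.sqrt (4 * Real.pi / V)) := by gcongr
    _ = r * (c * Real.sqrt (2 * Real.pi / V)) + Real.sqrt (2 * Real.pi * V) * s +
        (c * Real.sqrt (4 * Real.pi / V)) * Real.exp (-(V * t₀ ^ 2 / 4)) := by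
        rw [hc]; field_simp
    _ ≤ _ := by rw [hc1, mul_one]; gcongr

/-- Exponent of the power of `L` that has to be dominated by `N`: the first summand is what
`minor_arc` requires, the second serves the remaining estimates. -/
def domExp (k : ℕ) : ℕ :=
  (2 * (k * (3 * (2 ^ (k + 1) + 1) + 4 * k + 7) + 3 * 2 ^ (k + 1) + 4 * k + 12) + 3) +
    (6 * k + 7) * (4 * k + 6)

/-- Constant in the bound for the cubic Taylor remainder on the major arc. -/
noncomputable def cubicC (k : ℕ) : ℝ := 64 * Real.pi ^ 3 * upperC 2 * 2 ^ (3 * k + 1)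

/-- Constant in the bound for the relative error. -/
noncomputable def errorC (k : ℕ) : ℝ :=
  8 * cubicC k + Real.sqrt (2 * Real.pi * (8 * upperC 1 * 2 ^ (2 * k + 1))) + 2

lemma cubicC_pos (k : ℕ) : 0 < cubicC k := by
  have := upperC_pos 2
  have := Real.pi_pos
  unfold cubicC; positivity

set_option maxHeartbeats 1000000 in
/-- The relative error is `≪ L ^ (6k+6) / √N`, where `N` is about `X ^ (1/k)` and `L` about
`log N`. -/
lemma saddleError_bound {k : ℕ} (hk : 1 ≤ k) {X : ℝ} {N L n : ℕ}
    (hN : 1 ≤ N) (hNX : (N : ℝ) ^ k ≤ X) (hXN : X ≤ ((N : ℝ) + 1) ^ k)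
    (hL : k.factorial + 2 ^ k + 64 ≤ L) (hLC : 4 * cubicC k ≤ L) (hLN : L ^ domExp k ≤ N)
    (hlog : 10 * Real.log N ≤ L) (hlogk : (k + 1) * Real.log N ≤ L)
    (hn : Phim k 1 (Real.exp (-1 / X)) = n) :
    0 < Phim k 2 (Real.exp (-1 / X)) ∧
    |saddleError k (Real.exp (-1 / X)) n| ≤ errorC k * ((L : ℝ) ^ (6 * k + 6) / Real.sqrt N) := by
  have hπ := Real.pi_pos
  have hNr : (1 : ℝ) ≤ N := by exact_mod_cast hN
  have hN0 : (0 : ℝ) < N := by linarith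
  have hX : 0 < X := lt_of_lt_of_le (by positivity) hNX
  have hL64 : 64 ≤ L := (Nat.le_add_left _ _).trans hL
  have hLr : (64 : ℝ) ≤ L := by exact_mod_cast hL64
  have hL0 : (0 : ℝ) < L := by linarith
  have hLe : ∀ d ≤ (6 * k + 7) * (4 * k + 6), L ^ d ≤ N := fun d hd =>
    (Nat.pow_le_pow_right (by omega) (hd.trans (Nat.le_add_left _ _))).trans hLN
  set ρ := Real.exp (-1 / X) with hρ
  have hρ0 : 0 < ρ := Real.exp_pos _
  have hρ1 : ρ < 1 := by
    rw [hρ, Real.exp_lt_one_iff]; exact div_neg_of_neg_of_pos (by norm_num) hX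
  have hcheb : ∀ M, 2 ≤ M → M ≤ N → M ≤ L * (Nat.primesLE M).card :=
    fun M h2 hM => by exact_mod_cast chebyshev_lower hlog h2 hM
  set q := Real.sqrt N with hq
  have hq0 : 0 < q := Real.sqrt_pos.mpr hN0
  have hq2 : q ^ 2 = N := Real.sq_sqrt hN0.le
  have hq1 : 1 ≤ q := Real.one_le_sqrt.mpr hNr
  obtain ⟨S, hS⟩ := exists_finset_weight_lower (k := k) hX hNX
  set V := Phim k 2 ρ with hV
  set W := Phim k 3 ρ with hW
  have hN12 : (N : ℝ) + 1 ≤ 2 * N := by linarith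
  have hVlow : Real.exp (-1) * ((N : ℝ) / (2 * L)) ^ (2 * k + 1) ≤ V := by
    have hs1 : ((N : ℝ) / (2 * L)) ^ (2 * k + 1) ≤ ∑ p ∈ Nat.primesLE N, (p : ℝ) ^ (2 * k) := by
      refine sum_prime_pow_lower k (by omega) (hcheb N ?_ le_rfl)
      have := hLe 1 (by nlinarith)
      rw [pow_one] at this
      omega
    have hs2 := hS (fun f => (f : ℝ) ^ 2) (fun f => by positivity)
    have hs3 := sum_le_hasSum S (fun x _ => mul_nonneg (weight_nonneg hρ0 x) (by positivity))
      (hasSum_Phim hk hρ0 hρ1 2)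
    refine le_trans ?_ (hs2.trans hs3)
    refine mul_le_mul_of_nonneg_left (hs1.trans (le_of_eq ?_)) (Real.exp_pos _).le
    refine Finset.sum_congr rfl fun p _ => ?_
    push_cast; ring
  have hV0 : 0 < V := lt_of_lt_of_le (by positivity) hVlow
  have hVup : V ≤ 8 * upperC 1 * 2 ^ (2 * k + 1) * (N : ℝ) ^ (2 * k + 1) := by
    have h := Phim_upper hk 1 hX hXN
    have hu := (upperC_pos 1).le
    calc V ≤ 8 * upperC 1 * ((N : ℝ) + 1) ^ (k * (1 + 1) + 1) := h
      _ ≤ 8 * upperC 1 * (2 * (N : ℝ)) ^ (k * (1 + 1) + 1) := by gcongr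
      _ = _ := by rw [mul_pow, show k * (1 + 1) + 1 = 2 * k + 1 by ring]; ring
  have hW0 : 0 ≤ W := (hasSum_Phim hk hρ0 hρ1 3).nonneg
    fun x => mul_nonneg (weight_nonneg hρ0 x) (by positivity)
  have hWup : W ≤ 8 * upperC 2 * 2 ^ (3 * k + 1) * (N : ℝ) ^ (3 * k + 1) := by
    have h := Phim_upper hk 2 hX hXN
    have hu := (upperC_pos 2).le
    calc W ≤ 8 * upperC 2 * ((N : ℝ) + 1) ^ (k * (2 + 1) + 1) := h
      _ ≤ 8 * upperC 2 * (2 * (N : ℝ)) ^ (k * (2 + 1) + 1) := by gcongr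
      _ = _ := by rw [mul_pow, show k * (2 + 1) + 1 = 3 * k + 1 by ring]; ring
  -- The cut-off is the reach of `minor_arc`, slightly enlarged: it exceeds the width `V ^ (-1/2)` of
  -- the Gaussian by powers of `L` only.
  set t₀ := 2 * Real.pi * ((L : ℝ) ^ (2 * k + 2) / ((N : ℝ) ^ k * q)) with ht₀
  have ht₀0 : 0 ≤ t₀ := by positivity
  have ht₀sq : t₀ ^ 2 = 4 * Real.pi ^ 2 * ((L : ℝ) ^ (4 * k + 4) / (N : ℝ) ^ (2 * k + 1)) := by
    rw [ht₀, mul_pow, div_pow, mul_pow ((N : ℝ) ^ k), hq2, ← pow_mul, ← pow_mul, ← pow_succ,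
      show (2 * k + 2) * 2 = 4 * k + 4 by ring, show k * 2 + 1 = 2 * k + 1 by ring]
    ring
  have ht₀π : t₀ ≤ Real.pi := by
    have h1 : (L : ℝ) ^ (2 * k + 3) ≤ N := by
      exact_mod_cast hLe (2 * k + 3) (by nlinarith)
    have h2 : (N : ℝ) ≤ (N : ℝ) ^ k * q := by
      have := le_self_pow₀ hNr (by omega : k ≠ 0)
      nlinarith
    have h3 : (L : ℝ) ^ (2 * k + 2) / ((N : ℝ) ^ k * q) ≤ 1 / 2 := by
      rw [div_le_div_iff₀ (by positivity) (by norm_num)]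
      have : (L : ℝ) ^ (2 * k + 3) = (L : ℝ) ^ (2 * k + 2) * L := pow_succ _ _
      have h4 : 0 < (L : ℝ) ^ (2 * k + 2) := by positivity
      nlinarith
    rw [ht₀]
    nlinarith
  have hWt : W * t₀ ^ 3 ≤ cubicC k * ((L : ℝ) ^ (6 * k + 6) / q) := by
    have hu := (upperC_pos 2).le
    calc W * t₀ ^ 3 ≤ 8 * upperC 2 * 2 ^ (3 * k + 1) * (N : ℝ) ^ (3 * k + 1) * t₀ ^ 3 := by gcongr
      _ = _ := by
        rw [ht₀, cubicC, mul_pow, div_pow, mul_pow ((N : ℝ) ^ k), ← pow_mul, ← pow_mul,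
          show (2 * k + 2) * 3 = 6 * k + 6 by ring, show k * 3 = 3 * k by ring,
          pow_succ (N : ℝ) (3 * k)]
        rw [show q ^ 3 = N * q by rw [← hq2]; ring]
        field_simp
        ring
  have hLq : (L : ℝ) ^ (6 * k + 7) ≤ q := by
    apply Real.le_sqrt_of_sq_le
    rw [← pow_mul]
    exact_mod_cast hLe ((6 * k + 7) * 2) (by nlinarith)
  have hW4 : 4 * W * t₀ ^ 3 ≤ 1 := by
    have : 4 * cubicC k * ((L : ℝ) ^ (6 * k + 6) / q) ≤ 1 := by
      rw [← mul_div_assoc, div_le_one hq0]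
      refine le_trans ?_ hLq
      rw [pow_succ _ (6 * k + 6), mul_comm]
      gcongr
    linarith
  have hVt : (L : ℝ) ≤ V * t₀ ^ 2 / 4 := by
    have he : Real.exp (-1) * Real.pi ^ 2 ≥ 1 := by
      rw [Real.exp_neg, ge_iff_le, inv_mul_eq_div, le_div_iff₀ (Real.exp_pos _)]
      nlinarith [Real.exp_one_lt_d9, Real.pi_gt_three]
    have hb : (2 : ℝ) ^ (2 * k + 1) ≤ (L : ℝ) ^ (2 * k + 1) := by gcongr; linarith
    calc (L : ℝ) ≤ L ^ 2 := by nlinarith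
      _ ≤ (Real.exp (-1) * Real.pi ^ 2) * L ^ 2 := by nlinarith [sq_nonneg (L : ℝ)]
      _ ≤ (Real.exp (-1) * Real.pi ^ 2) * (L ^ 2 * (L ^ (2 * k + 1) / 2 ^ (2 * k + 1))) := by
          have : (1 : ℝ) ≤ (L : ℝ) ^ (2 * k + 1) / 2 ^ (2 * k + 1) := by
            rwa [one_le_div (by positivity)]
          gcongr
          nlinarith [sq_nonneg (L : ℝ)]
      _ = Real.exp (-1) * ((N : ℝ) / (2 * L)) ^ (2 * k + 1) * t₀ ^ 2 / 4 := by
          rw [ht₀sq, div_pow, mul_pow, show 4 * k + 4 = (2 * k + 1) + (2 * k + 1) + 2 by ring]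
          field_simp
          ring
      _ ≤ _ := by gcongr
  have hminor : ∀ t, t₀ < |t| → |t| ≤ Real.pi → ‖saddle k ρ t‖ ≤ Real.exp (-(L : ℝ)) := by
    intro t ht htπ
    refine norm_saddle_le hk hρ0 hρ1 S ?_
    set θ := t / (2 * Real.pi) with hθ
    have hθ' : |θ| ≤ 1 / 2 := by
      rw [hθ, abs_div, abs_of_pos (show 0 < 2 * Real.pi by positivity),
        div_le_div_iff₀ (by positivity) (by norm_num)]
      linarith
    have hsum : (L : ℝ) < ∑ p ∈ Nat.primesLE N, distInt (θ * (p : ℝ) ^ k) ^ 2 := by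
      by_contra hcon
      have h := minor_arc hL ((Nat.pow_le_pow_right (by omega) (Nat.le_add_right _ _)).trans hLN) hcheb hθ' (not_lt.mp hcon)
      have h1 : t₀ ^ 2 < t ^ 2 := by rw [← sq_abs t]; gcongr
      have h2 : t ^ 2 = 4 * Real.pi ^ 2 * θ ^ 2 := by rw [hθ]; field_simp; ring
      rw [ht₀sq, h2] at h1
      have h3 := lt_of_mul_lt_mul_left h1 (by positivity)
      rw [div_lt_iff₀ (by positivity)] at h3
      have h4 : (L : ℝ) ^ (4 * k + 3) ≤ (L : ℝ) ^ (4 * k + 4) :=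
        pow_le_pow_right₀ (by linarith) (by omega)
      linarith
    refine le_trans ?_ (hS (fun f => 1 - Real.cos (t * f))
      (fun f => by linarith [Real.cos_le_one (t * f)]))
    have hc : 8 * ∑ p ∈ Nat.primesLE N, distInt (θ * (p : ℝ) ^ k) ^ 2 ≤
        ∑ p ∈ Nat.primesLE N, (1 - Real.cos (t * (p ^ k : ℕ))) := by
      rw [Finset.mul_sum]
      refine Finset.sum_le_sum fun p _ => (distInt_sq_le_one_sub_cos _).trans (le_of_eq ?_)
      rw [hθ]
      congr 2
      push_cast; field_simp
    have he : 1 ≤ Real.exp (-1) * 8 := by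
      rw [Real.exp_neg, inv_mul_eq_div, le_div_iff₀ (Real.exp_pos _)]
      linarith [Real.exp_one_lt_d9]
    calc (L : ℝ) ≤ (Real.exp (-1) * 8) * L := by nlinarith
      _ ≤ (Real.exp (-1) * 8) * ∑ p ∈ Nat.primesLE N, distInt (θ * (p : ℝ) ^ k) ^ 2 := by gcongr
      _ = Real.exp (-1) * (8 * ∑ p ∈ Nat.primesLE N, distInt (θ * (p : ℝ) ^ k) ^ 2) := by ring
      _ ≤ _ := by gcongr
  refine ⟨hV0, ?_⟩
  have h := saddleError_le hk hρ0 hρ1 hn hV0 ht₀0 ht₀π (Real.exp_pos (-(L : ℝ))).le hW0 hW4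
    (r := 8 * (cubicC k * ((L : ℝ) ^ (6 * k + 6) / q))) (by linarith) hminor
  refine h.trans ?_
  have hexp : Real.exp (-(L : ℝ)) ≤ 1 / (N : ℝ) ^ (k + 1) := by
    rw [Real.exp_neg, ← one_div]
    apply one_div_le_one_div_of_le (by positivity)
    rw [← Real.exp_log (show (0 : ℝ) < (N : ℝ) ^ (k + 1) by positivity)]
    apply Real.exp_le_exp.mpr
    rw [Real.log_pow]; push_cast; exact hlogk
  have hLpow : (1 : ℝ) ≤ (L : ℝ) ^ (6 * k + 6) := one_le_pow₀ (by linarith)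
  set Z := (L : ℝ) ^ (6 * k + 6) / q with hZ
  have hZq : 1 / q ≤ Z := by rw [hZ]; gcongr
  have h1 : Real.sqrt (2 * Real.pi * V) * Real.exp (-(L : ℝ)) ≤
      Real.sqrt (2 * Real.pi * (8 * upperC 1 * 2 ^ (2 * k + 1))) * Z := by
    have hu := (upperC_pos 1).le
    have e1 : Real.sqrt (2 * Real.pi * V) ≤
        Real.sqrt (2 * Real.pi * (8 * upperC 1 * 2 ^ (2 * k + 1))) * ((N : ℝ) ^ k * q) := by
      rw [← Real.sqrt_sq (show 0 ≤ (N : ℝ) ^ k * q by positivity),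
        ← Real.sqrt_mul (by positivity)]
      apply Real.sqrt_le_sqrt
      rw [mul_pow, hq2, ← pow_mul, ← pow_succ, show k * 2 + 1 = 2 * k + 1 by ring,
        mul_assoc (2 * Real.pi)]
      exact mul_le_mul_of_nonneg_left hVup (by positivity)
    calc _ ≤ Real.sqrt (2 * Real.pi * (8 * upperC 1 * 2 ^ (2 * k + 1))) * ((N : ℝ) ^ k * q) *
          (1 / (N : ℝ) ^ (k + 1)) := by gcongr
      _ = Real.sqrt (2 * Real.pi * (8 * upperC 1 * 2 ^ (2 * k + 1))) * (1 / q) := by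
          rw [mul_assoc]; congr 1
          rw [pow_succ, ← hq2]; field_simp
      _ ≤ _ := by gcongr
  have h2 : Real.exp (-(V * t₀ ^ 2 / 4)) ≤ Z := by
    calc Real.exp (-(V * t₀ ^ 2 / 4)) ≤ Real.exp (-(L : ℝ)) :=
          Real.exp_le_exp.mpr (by linarith)
      _ ≤ 1 / (N : ℝ) ^ (k + 1) := hexp
      _ ≤ 1 / q := by
          apply one_div_le_one_div_of_le hq0
          calc q ≤ q ^ 2 := by nlinarith
            _ = N := hq2
            _ ≤ _ := le_self_pow₀ hNr (by omega)
      _ ≤ Z := hZq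
  unfold errorC
  linarith

/-! ### Asymptotics in terms of `n` -/

/-- Since `n ≪ N ^ (k+1)` and `(k + 1) / (2k + 3) = 1/2 - 1 / (2 (2k + 3))`, the quantity
`n ^ (-1/(2k+3))` exceeds `N ^ (-1/2)` by a small power of `N`, which absorbs the powers of `L`. -/
lemma error_conversion {k N L n : ℕ} {c : ℝ} (hc : 0 < c) (hN : 1 ≤ N) (hn : 1 ≤ n)
    (hnN : (n : ℝ) ≤ c * (N : ℝ) ^ (k + 1)) (hLN : L ^ domExp k ≤ N) (hL : 1 ≤ L) :
    (L : ℝ) ^ (6 * k + 6) / Real.sqrt N ≤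
      c ^ (1 / (2 * (k : ℝ) + 3)) * (n : ℝ) ^ (-(1 : ℝ) / (2 * (k : ℝ) + 3)) := by
  have hN0 : (0 : ℝ) < N := by exact_mod_cast hN
  have hn0 : (0 : ℝ) < n := by exact_mod_cast hn
  set a : ℝ := 1 / (2 * (k : ℝ) + 3) with ha
  have ha0 : 0 < a := by positivity
  have h1 : (L : ℝ) ^ (6 * k + 6) ≤ (N : ℝ) ^ (a / 2) := by
    have h2 : ((L : ℝ) ^ (6 * k + 6)) ^ (4 * k + 6) ≤ N := by
      rw [← pow_mul]
      have : L ^ ((6 * k + 6) * (4 * k + 6)) ≤ N := by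
        refine (Nat.pow_le_pow_right hL ?_).trans hLN
        exact (Nat.mul_le_mul_right _ (by omega)).trans (Nat.le_add_left _ _)
      exact_mod_cast this
    have h3 : (0 : ℝ) ≤ (L : ℝ) ^ (6 * k + 6) := by positivity
    have h4 := Real.rpow_le_rpow (by positivity) h2 (show 0 ≤ a / 2 by positivity)
    rw [← Real.rpow_natCast ((L : ℝ) ^ (6 * k + 6)) (4 * k + 6), ← Real.rpow_mul h3] at h4
    have e : ((4 * k + 6 : ℕ) : ℝ) * (a / 2) = 1 := by
      rw [ha]; push_cast; field_simp; ring
    rwa [e, Real.rpow_one] at h4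
  have e1 : (n : ℝ) ^ (-(1 : ℝ) / (2 * (k : ℝ) + 3)) = (n : ℝ) ^ (-a) := by
    rw [ha, neg_div]
  rw [e1]
  calc (L : ℝ) ^ (6 * k + 6) / Real.sqrt N ≤ (N : ℝ) ^ (a / 2) / Real.sqrt N := by gcongr
    _ = ((N : ℝ) ^ (k + 1)) ^ (-a) := by
        rw [Real.sqrt_eq_rpow, ← Real.rpow_sub hN0, ← Real.rpow_natCast, ← Real.rpow_mul hN0.le]
        congr 1
        rw [ha]; push_cast; field_simp; ring
    _ ≤ ((n : ℝ) / c) ^ (-a) := by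
        apply Real.rpow_le_rpow_of_nonpos (by positivity) _ (by linarith)
        rw [div_le_iff₀ hc]; linarith
    _ = _ := by
        rw [Real.div_rpow hn0.le hc.le, Real.rpow_neg hc.le]
        field_simp

lemma eventually_log_pow_le (c D : ℕ) (hc : 1 ≤ c) (B : ℝ) :
    ∀ᶠ N : ℕ in atTop, B ≤ (⌈(c : ℝ) * Real.log N⌉₊ : ℝ) ∧ ⌈(c : ℝ) * Real.log N⌉₊ ^ D ≤ N := by
  have hcr : (1 : ℝ) ≤ c := by exact_mod_cast hc
  have hlog : Tendsto (fun N : ℕ => Real.log N) atTop atTop :=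
    Real.tendsto_log_atTop.comp tendsto_natCast_atTop_atTop
  have ho := (Real.isLittleO_pow_log_id_atTop (n := D)).def
    (show (0 : ℝ) < 1 / ((c : ℝ) + 1) ^ D by positivity)
  have ho' := tendsto_natCast_atTop_atTop (R := ℝ) |>.eventually ho
  filter_upwards [hlog.eventually_ge_atTop (max 1 B), ho'] with N h1 h2
  have hl1 : 1 ≤ Real.log N := (le_max_left _ _).trans h1
  have hlB : B ≤ Real.log N := (le_max_right _ _).trans h1
  refine ⟨?_, ?_⟩
  · calc B ≤ 1 * Real.log N := by linarith
      _ ≤ c * Real.log N := by gcongr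
      _ ≤ _ := Nat.le_ceil _
  · have h3 : (⌈(c : ℝ) * Real.log N⌉₊ : ℝ) ≤ (c + 1) * Real.log N := by
      have := (Nat.ceil_lt_add_one (show 0 ≤ (c : ℝ) * Real.log N by positivity)).le
      linarith
    have h4 : (⌈(c : ℝ) * Real.log N⌉₊ : ℝ) ^ D ≤ N := by
      calc _ ≤ ((c + 1) * Real.log N) ^ D := by gcongr
        _ = (c + 1) ^ D * Real.log N ^ D := mul_pow _ _ _
        _ ≤ (c + 1) ^ D * (1 / ((c : ℝ) + 1) ^ D * N) := by
            gcongr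
            simpa [abs_of_nonneg (show 0 ≤ Real.log N by linarith)] using h2
        _ = N := by field_simp
    exact_mod_cast h4

/-- Theorem 1.4: the full asymptotic formula
`p_{ℙ_k}(n) = ρ^{-n} Ψ(ρ) / √(2π Φ_{(2)}(ρ)) (1 + O(n^{-1/(2k+3)}))`. -/
theorem stmt4 (k : ℕ) (hk : 1 ≤ k) (ρ : ℕ → ℝ)
    (hρ : ∀ n, ρ n ∈ Set.Ioo (0 : ℝ) 1)
    (hx : ∀ᶠ n : ℕ in atTop, Phim k 1 (ρ n) = n) :
    ∃ E : ℕ → ℝ,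
      (E =O[atTop] fun n : ℕ => (n : ℝ) ^ (-(1 : ℝ) / (2 * (k : ℝ) + 3))) ∧
      ∀ᶠ n : ℕ in atTop,
        (pPk k n : ℝ) =
          ρ n ^ (-(n : ℤ)) * Real.exp (Phim k 0 (ρ n)) /
            Real.sqrt (2 * Real.pi * Phim k 2 (ρ n)) * (1 + E n) := by
  have hπ := Real.pi_pos
  set X : ℕ → ℝ := fun n => -1 / Real.log (ρ n) with hX
  have hX0 : ∀ n, 0 < X n := fun n => (exists_eq_exp (hρ n).1 (hρ n).2).1
  have hρX : ∀ n, ρ n = Real.exp (-1 / X n) := fun n => (exists_eq_exp (hρ n).1 (hρ n).2).2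
  set N : ℕ → ℕ := fun n => ⌊X n ^ ((k : ℝ)⁻¹)⌋₊ with hN
  have hroot : ∀ n, (X n ^ ((k : ℝ)⁻¹)) ^ k = X n := fun n =>
    Real.rpow_inv_natCast_pow (hX0 n).le (by omega)
  have hNX : ∀ n, (N n : ℝ) ^ k ≤ X n := fun n => by
    rw [← hroot n]
    gcongr
    exact Nat.floor_le (Real.rpow_nonneg (hX0 n).le _)
  have hXN : ∀ n, X n ≤ ((N n : ℝ) + 1) ^ k := fun n => by
    calc X n = (X n ^ ((k : ℝ)⁻¹)) ^ k := (hroot n).symm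
      _ ≤ _ := by
        have := Real.rpow_nonneg (hX0 n).le ((k : ℝ)⁻¹)
        gcongr
        exact (Nat.lt_floor_add_one _).le
  have hu := upperC_pos 0
  have hnN : ∀ᶠ n : ℕ in atTop, (n : ℝ) ≤ 8 * upperC 0 * ((N n : ℝ) + 1) ^ (k + 1) := by
    filter_upwards [hx] with n hn
    have h := Phim_upper hk 0 (hX0 n) (hXN n)
    rw [← hρX n, hn] at h
    simpa using h
  have hNtop : Tendsto N atTop atTop := by
    refine tendsto_atTop.mpr fun B => ?_
    have hlarge := (tendsto_natCast_atTop_atTop (R := ℝ)).eventually_gt_atTop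
      (8 * upperC 0 * ((B : ℝ) + 1) ^ (k + 1))
    filter_upwards [hnN, hlarge] with n h1 h2
    by_contra hB
    have h3 : (N n : ℝ) ≤ B := by exact_mod_cast (not_le.mp hB).le
    have h4 : 8 * upperC 0 * ((N n : ℝ) + 1) ^ (k + 1) ≤ 8 * upperC 0 * ((B : ℝ) + 1) ^ (k + 1) := by
      gcongr
    linarith
  set L : ℕ → ℕ := fun n => ⌈((k + 11 : ℕ) : ℝ) * Real.log (N n)⌉₊ with hL
  have hev := hNtop.eventually (eventually_log_pow_le (k + 11) (domExp k) (by omega)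
    (max (4 * cubicC k) ((k.factorial + 2 ^ k + 64 : ℕ) : ℝ)))
  have hmain : ∀ᶠ n : ℕ in atTop, 0 < Phim k 2 (ρ n) ∧
      |saddleError k (ρ n) n| ≤ errorC k * ((8 * upperC 0 * 2 ^ (k + 1)) ^ (1 / (2 * (k : ℝ) + 3)) *
        (n : ℝ) ^ (-(1 : ℝ) / (2 * (k : ℝ) + 3))) := by
    filter_upwards [hx, hnN, hev, hNtop.eventually_ge_atTop 1, eventually_ge_atTop 1] with
      n hn hnN' ⟨hB, hD⟩ hN1 hn1
    have hNr : (1 : ℝ) ≤ N n := by exact_mod_cast hN1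
    have hlog0 : 0 ≤ Real.log (N n) := Real.log_nonneg hNr
    have hceil : ((k + 11 : ℕ) : ℝ) * Real.log (N n) ≤ L n := Nat.le_ceil _
    push_cast at hceil
    have hkr : (0 : ℝ) ≤ k := by positivity
    have hL1 : k.factorial + 2 ^ k + 64 ≤ L n := by
      exact_mod_cast (le_max_right _ _).trans hB
    obtain ⟨hV, hE⟩ := saddleError_bound hk (n := n) hN1 (hNX n) (hXN n) hL1
      ((le_max_left _ _).trans hB) hD (by nlinarith) (by nlinarith) (by rw [← hρX n]; exact hn)
    rw [← hρX n] at hV hE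
    refine ⟨hV, hE.trans ?_⟩
    have hC : 0 ≤ errorC k := by
      have := cubicC_pos k
      unfold errorC; positivity
    refine mul_le_mul_of_nonneg_left ?_ hC
    refine error_conversion (by positivity) hN1 hn1 ?_ hD
      ((by omega : 1 ≤ 64).trans ((Nat.le_add_left _ _).trans hL1))
    calc (n : ℝ) ≤ 8 * upperC 0 * ((N n : ℝ) + 1) ^ (k + 1) := hnN'
      _ ≤ 8 * upperC 0 * (2 * (N n : ℝ)) ^ (k + 1) := by gcongr; linarith
      _ = _ := by rw [mul_pow]; ring
  refine ⟨fun n => saddleError k (ρ n) n, ?_, ?_⟩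
  · refine Asymptotics.IsBigO.of_bound
      (errorC k * (8 * upperC 0 * 2 ^ (k + 1)) ^ (1 / (2 * (k : ℝ) + 3))) ?_
    filter_upwards [hmain] with n hn
    rw [Real.norm_eq_abs, Real.norm_of_nonneg (by positivity), mul_assoc]
    exact hn.2
  · filter_upwards [hmain] with n hn
    have hs : Real.sqrt (2 * Real.pi * Phim k 2 (ρ n)) ≠ 0 :=
      (Real.sqrt_pos.mpr (mul_pos (by positivity) hn.1)).ne'
    have hρn : ρ n ≠ 0 := (hρ n).1.ne'
    rw [saddleError, Real.exp_neg, zpow_neg, zpow_natCast]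
    have := (Real.exp_pos (Phim k 0 (ρ n))).ne'
    field_simp
    ring
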